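/- arXiv:1401.3268 — 10 statements merged into one kernel-verified Lean document; each statement's English description precedes it below -/
import Mathlib

section
/- Let n ≥ 1 and let A : Matrix (Fin (n+1)) (Fin (n+1)) ℕ with zero diagonal be the adjacency matrix of a strongly connected directed multigraph, with Laplacian Q = D − A. Then there exists a vector Σ : Fin (n+1) → ℤ with every entry strictly positive such that the left kernel of Q over ℚ, namely {w : Fin (n+1) → ℚ | Matrix.vecMul w (Q.map (↑· : ℤ → ℚ)) = 0}, is exactly the set of rational scalar multiples of Σ. -/
open Matrix

/-- The Laplacian `Q = D - A` of the directed multigraph with adjacency matrix `A`. -/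
def lap {n : ℕ} (A : Matrix (Fin (n+1)) (Fin (n+1)) ℕ) :
    Matrix (Fin (n+1)) (Fin (n+1)) ℤ :=
  Matrix.diagonal (fun i => ∑ j, (A i j : ℤ)) - A.map (fun a => (a : ℤ))

/-- Strong connectivity of a directed multigraph given by its adjacency matrix. -/
def StronglyConnected {n : ℕ} (A : Matrix (Fin (n+1)) (Fin (n+1)) ℕ) : Prop :=
  ∀ i j : Fin (n+1), i ≠ j → Relation.TransGen (fun a b => 0 < A a b) i j

/-!
The Laplacian kills the constant vector, so it is singular and some `w ≠ 0` lies in its left kernel.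
By the triangle inequality every entry of `|w| (D - A)` is nonpositive; since the rows of `D - A`
sum to zero, so do these entries, and hence `|w|` lies in the left kernel as well. A nonnegative
kernel vector that is positive at the tail of an edge is positive at its head, so by strong
connectivity a nonzero kernel vector has no zero entry. Subtracting from a kernel vector the
multiple of `|w|` that cancels one of its entries therefore gives `0`, so the kernel is the line
spanned by `|w|`, and clearing denominators makes `|w|` integral.
-/

/-- The Laplacian `D - A` of a directed graph with edge weights `A` in an arbitrary ring, where `D`
is the diagonal matrix of the row sums of `A`. Loops are allowed, as they cancel. -/
def weightedLap {ι R : Type*} [Fintype ι] [DecidableEq ι] [Ring R] (A : Matrix ι ι R) :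
    Matrix ι ι R :=
  diagonal (fun i => ∑ j, A i j) - A

section Laplacian

variable {ι R : Type*} [Fintype ι] [DecidableEq ι]

section Ring

variable [Ring R]

theorem vecMul_weightedLap_apply (A : Matrix ι ι R) (w : ι → R) (j : ι) :
    (w ᵥ* weightedLap A) j = w j * ∑ k, A j k - ∑ i, w i * A i j := by
  rw [weightedLap, vecMul_sub, Pi.sub_apply, vecMul_diagonal]
  rfl

theorem weightedLap_mulVec_one (A : Matrix ι ι R) : weightedLap A *ᵥ 1 = 0 := by
  ext i
  rw [weightedLap, sub_mulVec, Pi.sub_apply, mulVec_diagonal]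
  simp [mulVec, dotProduct_one]

theorem sum_vecMul_weightedLap (A : Matrix ι ι R) (w : ι → R) :
    ∑ j, (w ᵥ* weightedLap A) j = 0 := by
  rw [← dotProduct_one, ← dotProduct_mulVec, weightedLap_mulVec_one, dotProduct_zero]

end Ring

theorem exists_ne_zero_vecMul_weightedLap_eq_zero [Nonempty ι] [CommRing R] [IsDomain R]
    (A : Matrix ι ι R) : ∃ w ≠ 0, w ᵥ* weightedLap A = 0 :=
  exists_vecMul_eq_zero_iff.2 <|
    exists_mulVec_eq_zero_iff.1 ⟨1, one_ne_zero, weightedLap_mulVec_one A⟩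

section OrderedRing

variable [Ring R] [LinearOrder R] [IsStrictOrderedRing R] {A : Matrix ι ι R} {u w : ι → R}

theorem abs_vecMul_weightedLap_nonpos (hA : ∀ i j, 0 ≤ A i j) (hw : w ᵥ* weightedLap A = 0)
    (j : ι) : (|w| ᵥ* weightedLap A) j ≤ 0 := by
  have balance : w j * ∑ k, A j k = ∑ i, w i * A i j := by
    rw [← sub_eq_zero, ← vecMul_weightedLap_apply, hw, Pi.zero_apply]
  rw [vecMul_weightedLap_apply, sub_nonpos]
  calc |w| j * ∑ k, A j k
      = |∑ i, w i * A i j| := by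
        rw [← balance, abs_mul, abs_of_nonneg (Finset.sum_nonneg fun k _ => hA j k), Pi.abs_apply]
    _ ≤ ∑ i, |w i * A i j| := Finset.abs_sum_le_sum_abs _ _
    _ = ∑ i, |w| i * A i j := by simp only [abs_mul, abs_of_nonneg (hA _ _), Pi.abs_apply]

theorem abs_vecMul_weightedLap_eq_zero (hA : ∀ i j, 0 ≤ A i j) (hw : w ᵥ* weightedLap A = 0) :
    |w| ᵥ* weightedLap A = 0 := by
  have entries_eq_zero := (Finset.sum_eq_zero_iff_of_nonpos fun j _ =>
    abs_vecMul_weightedLap_nonpos hA hw j).1 (sum_vecMul_weightedLap A |w|)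
  exact funext fun j => entries_eq_zero j (Finset.mem_univ j)

theorem pos_of_vecMul_weightedLap_eq_zero_of_pos (hA : ∀ i j, 0 ≤ A i j) (hu : 0 ≤ u)
    (hker : u ᵥ* weightedLap A = 0) {a b : ι} (ha : 0 < u a) (hab : 0 < A a b) : 0 < u b := by
  have inflow_pos : 0 < ∑ i, u i * A i b :=
    Finset.sum_pos' (fun i _ => mul_nonneg (hu i) (hA i b))
      ⟨a, Finset.mem_univ a, mul_pos ha hab⟩
  have balance : u b * ∑ k, A b k = ∑ i, u i * A i b := by
    rw [← sub_eq_zero, ← vecMul_weightedLap_apply, hker, Pi.zero_apply]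
  exact pos_of_mul_pos_left (balance ▸ inflow_pos) (Finset.sum_nonneg fun k _ => hA b k)

theorem abs_pos_of_vecMul_weightedLap_eq_zero (hA : ∀ i j, 0 ≤ A i j)
    (hconn : ∀ i j, Relation.ReflTransGen (fun a b => 0 < A a b) i j)
    (hw : w ᵥ* weightedLap A = 0) (hw₀ : w ≠ 0) (j : ι) : 0 < |w| j := by
  obtain ⟨i, hi⟩ := Function.ne_iff.1 hw₀
  induction hconn i j with
  | refl => exact abs_pos.2 hi
  | tail _ hab ih =>
    exact pos_of_vecMul_weightedLap_eq_zero_of_pos hA (abs_nonneg w)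
      (abs_vecMul_weightedLap_eq_zero hA hw) ih hab

end OrderedRing

theorem vecMul_weightedLap_eq_zero_iff_exists_eq_smul {K : Type*} [Field K] [LinearOrder K]
    [IsStrictOrderedRing K] {A : Matrix ι ι K} (hA : ∀ i j, 0 ≤ A i j)
    (hconn : ∀ i j, Relation.ReflTransGen (fun a b => 0 < A a b) i j)
    {u : ι → K} (hu : u ᵥ* weightedLap A = 0) (hu₀ : u ≠ 0) {w : ι → K} :
    w ᵥ* weightedLap A = 0 ↔ ∃ c : K, w = c • u := by
  constructor
  · intro hw
    obtain ⟨j, hj⟩ := Function.ne_iff.1 hu₀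
    refine ⟨w j / u j, ?_⟩
    have diff_ker : (w - (w j / u j) • u) ᵥ* weightedLap A = 0 := by
      rw [sub_vecMul, smul_vecMul, hw, hu, smul_zero, sub_zero]
    have diff_apply : (w - (w j / u j) • u) j = 0 := by
      rw [Pi.sub_apply, Pi.smul_apply, smul_eq_mul, div_mul_cancel₀ _ hj, sub_self]
    by_contra hne
    exact abs_pos.1 (abs_pos_of_vecMul_weightedLap_eq_zero hA hconn diff_ker
      (sub_ne_zero.2 hne) j) diff_apply
  · rintro ⟨c, rfl⟩
    rw [smul_vecMul, hu, smul_zero]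

end Laplacian

theorem exists_int_pos_eq_smul {ι : Type*} [Finite ι] {u : ι → ℚ} (hu : ∀ i, 0 < u i) :
    ∃ s : ι → ℤ, (∀ i, 0 < s i) ∧ ∃ c : ℚ, (fun i => (s i : ℚ)) = c • u := by
  obtain ⟨b, hb⟩ := IsLocalization.exist_integer_multiples_of_finite (nonZeroDivisors ℤ) u
  choose s hs using hb
  have hb₀ : (b : ℤ) ≠ 0 := nonZeroDivisors.coe_ne_zero b
  have hs' (i : ι) : (s i : ℚ) = (b : ℤ) * u i := by simpa using hs i
  have abs_s (i : ι) : ((|s i| : ℤ) : ℚ) = |((b : ℤ) : ℚ)| * u i := by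
    rw [Int.cast_abs, hs', abs_mul, abs_of_pos (hu i)]
  refine ⟨fun i => |s i|, fun i => ?_, |((b : ℤ) : ℚ)|, funext abs_s⟩
  rw [← Int.cast_pos (R := ℚ), abs_s]
  exact mul_pos (abs_pos.2 (Int.cast_ne_zero.2 hb₀)) (hu i)

theorem map_lap_eq_weightedLap {n : ℕ} (A : Matrix (Fin (n + 1)) (Fin (n + 1)) ℕ)
    (R : Type*) [Ring R] :
    (lap A).map (fun z => (z : R)) = weightedLap (A.map fun a => (a : R)) := by
  ext i j
  by_cases hij : i = j <;> simp [lap, weightedLap, hij]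

theorem StronglyConnected.reflTransGen {n : ℕ} {A : Matrix (Fin (n + 1)) (Fin (n + 1)) ℕ}
    (h : StronglyConnected A) (i j : Fin (n + 1)) :
    Relation.ReflTransGen (fun a b => 0 < A a b) i j := by
  obtain rfl | hij := eq_or_ne i j
  · exact .refl
  · exact (h i j hij).to_reflTransGen

theorem stmt0_general {ι : Type*} [Fintype ι] [DecidableEq ι] [Nonempty ι] (A : Matrix ι ι ℚ)
    (hA : ∀ i j, 0 ≤ A i j)
    (hconn : ∀ i j, Relation.ReflTransGen (fun a b => 0 < A a b) i j) :
    ∃ sig : ι → ℤ, (∀ i, 0 < sig i) ∧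
      {w : ι → ℚ | w ᵥ* weightedLap A = 0} =
        {w : ι → ℚ | ∃ c : ℚ, w = c • (fun i => (sig i : ℚ))} := by
  obtain ⟨w, hw₀, hw⟩ := exists_ne_zero_vecMul_weightedLap_eq_zero A
  obtain ⟨sig, sig_pos, c, hsig⟩ :=
    exists_int_pos_eq_smul (abs_pos_of_vecMul_weightedLap_eq_zero hA hconn hw hw₀)
  have sig_ker : (fun i => (sig i : ℚ)) ᵥ* weightedLap A = 0 := by
    rw [hsig, smul_vecMul, abs_vecMul_weightedLap_eq_zero hA hw, smul_zero]
  have sig_ne_zero : (fun i => (sig i : ℚ)) ≠ 0 :=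
    Function.ne_iff.2 ⟨Classical.arbitrary ι, Int.cast_ne_zero.2 (sig_pos _).ne'⟩
  exact ⟨sig, sig_pos, Set.ext fun _ =>
    vecMul_weightedLap_eq_zero_iff_exists_eq_smul hA hconn sig_ker sig_ne_zero⟩

theorem stmt0 (n : ℕ) (hn : 1 ≤ n) (A : Matrix (Fin (n+1)) (Fin (n+1)) ℕ)
    (hdiag : ∀ i, A i i = 0) (hsc : StronglyConnected A) :
    ∃ sig : Fin (n+1) → ℤ, (∀ i, 0 < sig i) ∧
      {w : Fin (n+1) → ℚ | Matrix.vecMul w ((lap A).map (fun z => (z : ℚ))) = 0}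
        = {w : Fin (n+1) → ℚ | ∃ c : ℚ, w = c • (fun i => (sig i : ℚ))} := by
  simpa only [map_lap_eq_weightedLap] using
    stmt0_general (A.map (↑)) (fun i j => (A i j).cast_nonneg)
      (by simpa only [map_apply, Nat.cast_pos] using hsc.reflTransGen)
end

section
/- Let n ≥ 1 and let A : Matrix (Fin (n+1)) (Fin (n+1)) ℕ with zero diagonal be the adjacency matrix of a directed multigraph with Laplacian Q = D − A. Suppose there exists a vector Σ : Fin (n+1) → ℤ with every entry strictly positive such that Matrix.vecMul Σ Q = 0 and such that every w : Fin (n+1) → ℚ with Matrix.vecMul w (Q.map (↑· : ℤ → ℚ)) = 0 is a rational scalar multiple of Σ. Then the directed multigraph is strongly connected. -/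
open Matrix

/-!
A positive `σ` with `σ ᵥ* Q = 0` makes `σ i * A i j` a circulation: at every vertex the inflow
equals the outflow. No flow leaves the set of vertices reachable from a vertex `a`, so none enters
it either, and restricting `σ` to that set gives another kernel vector. As the kernel is spanned by
`σ`, the restriction is `σ` itself, i.e. every vertex is reachable from `a`.
-/

open Finset Relation

section Circulation

variable {V M : Type*} [Fintype V]

/-- `f` is a circulation, where `f i j` is the flow from `i` to `j`: inflow and outflow agree at
every vertex. -/
def IsCirculation [AddCommMonoid M] (f : V → V → M) : Prop :=
  ∀ v, ∑ u, f u v = ∑ w, f v w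

namespace IsCirculation

theorem sum_cut_eq [DecidableEq V] [AddCancelCommMonoid M] {f : V → V → M} (hf : IsCirculation f)
    (s : Finset V) : ∑ i ∈ s, ∑ j ∈ sᶜ, f i j = ∑ i ∈ sᶜ, ∑ j ∈ s, f i j := by
  refine add_left_cancel (a := ∑ i ∈ s, ∑ j ∈ s, f i j) ?_
  calc ∑ i ∈ s, ∑ j ∈ s, f i j + ∑ i ∈ s, ∑ j ∈ sᶜ, f i j
      = ∑ i ∈ s, ∑ j, f i j := by simp only [← sum_add_distrib, sum_add_sum_compl]
    _ = ∑ i ∈ s, ∑ j, f j i := sum_congr rfl fun v _ ↦ (hf v).symm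
    _ = ∑ j, ∑ i ∈ s, f j i := sum_comm
    _ = ∑ i ∈ s, ∑ j ∈ s, f i j + ∑ i ∈ sᶜ, ∑ j ∈ s, f i j := (sum_add_sum_compl s _).symm

theorem eq_zero_of_forall_leaving_eq_zero [AddCancelCommMonoid M] [PartialOrder M]
    [IsOrderedAddMonoid M] {f : V → V → M} (hf : IsCirculation f) (hf₀ : ∀ i j, 0 ≤ f i j)
    {s : Set V} (hs : ∀ i ∈ s, ∀ j ∉ s, f i j = 0) {i j : V} (hi : i ∉ s) (hj : j ∈ s) :
    f i j = 0 := by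
  classical
  have inflow : ∑ i ∈ s.toFinsetᶜ, ∑ j ∈ s.toFinset, f i j = 0 := by
    rw [← hf.sum_cut_eq]
    exact sum_eq_zero fun i hi ↦ sum_eq_zero fun j hj ↦
      hs i (by simpa using hi) j (by simpa using hj)
  rw [sum_eq_zero_iff_of_nonneg fun i _ ↦ sum_nonneg fun j _ ↦ hf₀ i j] at inflow
  exact (sum_eq_zero_iff_of_nonneg fun j _ ↦ hf₀ i j).1 (inflow i (by simpa using hi)) j
    (by simpa using hj)

theorem indicator [AddCommMonoid M] {f : V → V → M} (hf : IsCirculation f) {s : Set V}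
    (hout : ∀ i ∈ s, ∀ j ∉ s, f i j = 0) (hin : ∀ i ∉ s, ∀ j ∈ s, f i j = 0) :
    IsCirculation (s.indicator f) := by
  intro v
  by_cases hv : v ∈ s
  · calc ∑ u, s.indicator f u v = ∑ u, f u v := sum_congr rfl fun u _ ↦ by
          by_cases hu : u ∈ s <;> simp [hu, hin, hv]
      _ = ∑ w, s.indicator f v w := by rw [hf v, Set.indicator_of_mem hv]
  · have column (u : V) : s.indicator f u v = 0 := by
      by_cases hu : u ∈ s <;> simp [hu, hout, hv]
    simp [column, hv]

end IsCirculation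

end Circulation

section OutLaplacian

variable {V R : Type*} [Fintype V] [DecidableEq V]

/-- The Laplacian of the directed graph with edge weights `W`, the weighted outdegrees being on the
diagonal. It extends `lap` to arbitrary finite vertex types and coefficient rings. -/
def outLaplacian [AddCommGroup R] (W : Matrix V V R) : Matrix V V R :=
  diagonal (fun i ↦ ∑ j, W i j) - W

theorem vecMul_outLaplacian_eq_zero_iff [Ring R] {σ : V → R} {W : Matrix V V R} :
    σ ᵥ* outLaplacian W = 0 ↔ IsCirculation fun i j ↦ σ i * W i j := by
  simp only [outLaplacian, vecMul_sub, sub_eq_zero, funext_iff, vecMul_diagonal, IsCirculation,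
    ← mul_sum]
  exact forall_congr' fun v ↦ eq_comm

theorem vecMul_indicator_outLaplacian_eq_zero [Ring R] [PartialOrder R] [IsOrderedRing R]
    {σ : V → R} {W : Matrix V V R} (hσ : ∀ i, 0 ≤ σ i) (hW : ∀ i j, 0 ≤ W i j)
    (hker : σ ᵥ* outLaplacian W = 0) {s : Set V} (hs : ∀ i ∈ s, ∀ j, 0 < W i j → j ∈ s) :
    s.indicator σ ᵥ* outLaplacian W = 0 := by
  rw [vecMul_outLaplacian_eq_zero_iff] at hker ⊢
  have hout : ∀ i ∈ s, ∀ j ∉ s, σ i * W i j = 0 := fun i hi j hj ↦ by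
    have no_edge : W i j = 0 := (hW i j).eq_or_lt'.resolve_right fun h ↦ hj (hs i hi j h)
    rw [no_edge, mul_zero]
  have hin : ∀ i ∉ s, ∀ j ∈ s, σ i * W i j = 0 := fun i hi j hj ↦
    hker.eq_zero_of_forall_leaving_eq_zero (fun i j ↦ mul_nonneg (hσ i) (hW i j)) hout hi hj
  convert hker.indicator hout hin using 3 with i j
  by_cases hi : i ∈ s <;> simp [hi]

theorem stmt1_general [Ring R] [LinearOrder R] [IsStrictOrderedRing R] {W : Matrix V V R}
    (hW : ∀ i j, 0 ≤ W i j) {σ : V → R} (hσ : ∀ i, 0 < σ i) (hker : σ ᵥ* outLaplacian W = 0)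
    (hspan : ∀ w : V → R, w ᵥ* outLaplacian W = 0 → ∃ c : R, w = c • σ) (i j : V) :
    ReflTransGen (fun a b ↦ 0 < W a b) i j := by
  let s : Set V := {k | ReflTransGen (fun a b ↦ 0 < W a b) i k}
  have hi : i ∈ s := .refl
  obtain ⟨c, hc⟩ := hspan _ <| vecMul_indicator_outLaplacian_eq_zero (s := s) (fun i ↦ (hσ i).le)
    hW hker fun _ hk _ hkl ↦ hk.tail hkl
  by_contra hj
  have hcj : 0 = c * σ j := (Set.indicator_of_notMem hj σ).symm.trans (congrFun hc j)
  have hci : σ i = c * σ i := (Set.indicator_of_mem hi σ).symm.trans (congrFun hc i)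
  have hc₀ : c = 0 := (mul_eq_zero.1 hcj.symm).resolve_right (hσ j).ne'
  exact (hσ i).ne' (by rw [hci, hc₀, zero_mul])

end OutLaplacian

section Cast

variable {n : ℕ} {A : Matrix (Fin (n + 1)) (Fin (n + 1)) ℕ}

theorem map_intCast_lap {R : Type*} [Ring R] :
    (lap A).map (fun z ↦ (z : R)) = outLaplacian (A.map Nat.cast) := by
  ext i j
  by_cases h : i = j <;> simp [lap, outLaplacian, h]

theorem intCast_vecMul_outLaplacian_eq_zero {R : Type*} [Ring R] {σ : Fin (n + 1) → ℤ}
    (hker : σ ᵥ* lap A = 0) :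
    (fun i ↦ (σ i : R)) ᵥ* outLaplacian (A.map Nat.cast) = 0 := by
  ext i
  have hcast := RingHom.map_vecMul (Int.castRingHom R) (lap A) σ i
  rw [hker, Pi.zero_apply, map_zero] at hcast
  rw [← map_intCast_lap]
  exact hcast.symm

theorem stronglyConnected_iff_reflTransGen :
    StronglyConnected A ↔ ∀ i j, ReflTransGen (fun a b ↦ 0 < A a b) i j := by
  simp only [StronglyConnected, reflTransGen_iff_eq_or_transGen, or_iff_not_imp_left, ne_eq,
    eq_comm]

end Cast

theorem stmt1 (n : ℕ) (hn : 1 ≤ n) (A : Matrix (Fin (n+1)) (Fin (n+1)) ℕ)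
    (hdiag : ∀ i, A i i = 0)
    (sig : Fin (n+1) → ℤ) (hpos : ∀ i, 0 < sig i)
    (hker : Matrix.vecMul sig (lap A) = 0)
    (hspan : ∀ w : Fin (n+1) → ℚ,
      Matrix.vecMul w ((lap A).map (fun z => (z : ℚ))) = 0 →
        ∃ c : ℚ, w = c • (fun i => (sig i : ℚ))) :
    StronglyConnected A := by
  simp only [map_intCast_lap] at hspan
  simpa [stronglyConnected_iff_reflTransGen] using stmt1_general (W := A.map (Nat.cast : ℕ → ℚ))
    (by simp) (by simpa using hpos) (intCast_vecMul_outLaplacian_eq_zero hker) hspan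
end

section
/- Let n ≥ 1 and let A : Matrix (Fin (n+1)) (Fin (n+1)) ℕ with zero diagonal be the adjacency matrix of a strongly connected directed multigraph with Laplacian Q = D − A. Then every nonzero vector w : Fin (n+1) → ℝ with Matrix.vecMul w (Q.map (↑· : ℤ → ℝ)) = 0 has either all entries strictly positive or all entries strictly negative. -/
open Matrix

/-!
A positive entry of a nonnegative vector `u` with `u ᵥ* M ≤ u * d` forces positivity along every
edge, so by connectivity `u` vanishes or is positive everywhere. For `w` in the left kernel of the
Laplacian `L`, monotonicity gives `w⁺ ᵥ* L ≤ 0`; the entries of `w⁺ ᵥ* L` sum to zero because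
`L *ᵥ 1 = 0`, hence `w⁺` lies in the left kernel too. Apply the dichotomy to `w⁺`, and to `-w` if
`w⁺ = 0`.
-/

section NonnegMatrix

variable {V R : Type*} [Fintype V] [Semiring R] [PartialOrder R] [IsStrictOrderedRing R]
  {M : Matrix V V R} {u d : V → R}

theorem pos_of_edge_of_vecMul_le (hM : ∀ i j, 0 ≤ M i j) (hu : 0 ≤ u) (hle : u ᵥ* M ≤ u * d)
    {i j : V} (hij : 0 < M i j) (hi : 0 < u i) : 0 < u j := by
  refine lt_of_le_of_ne (hu j) fun hj => ?_
  have hpos : 0 < u j * d j := calc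
    0 < u i * M i j := mul_pos hi hij
    _ ≤ (u ᵥ* M) j := Finset.single_le_sum (f := fun k => u k * M k j)
      (fun k _ => mul_nonneg (hu k) (hM k j)) (Finset.mem_univ i)
    _ ≤ u j * d j := hle j
  rw [← hj, zero_mul] at hpos
  exact hpos.false

theorem forall_pos_of_vecMul_le (hM : ∀ i j, 0 ≤ M i j)
    (hconn : ∀ i j, Relation.ReflTransGen (fun a b => 0 < M a b) i j)
    (hu : 0 ≤ u) (hu₀ : u ≠ 0) (hle : u ᵥ* M ≤ u * d) (j : V) : 0 < u j := by
  obtain ⟨i, hi⟩ := Function.ne_iff.mp hu₀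
  induction hconn i j with
  | refl => exact lt_of_le_of_ne (hu i) hi.symm
  | tail _ hab ha => exact pos_of_edge_of_vecMul_le hM hu hle hab ha

end NonnegMatrix

section WeightedLaplacian

variable {V R : Type*} [Fintype V] [DecidableEq V] [Ring R] {M : Matrix V V R} {u w : V → R}

/-- The outdegree Laplacian of the weighted directed graph on `V` whose edge from `i` to `j` has
weight `M i j`. The weights take values in a ring, so that edge multiplicities and real weights are
treated alike; `M *ᵥ 1` is the vector of weighted outdegrees. -/
def weightedLaplacian (M : Matrix V V R) : Matrix V V R :=
  diagonal (M *ᵥ 1) - M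

theorem vecMul_weightedLaplacian (u : V → R) (M : Matrix V V R) :
    u ᵥ* weightedLaplacian M = u * (M *ᵥ 1) - u ᵥ* M := by
  ext j
  simp [weightedLaplacian, vecMul_sub, vecMul_diagonal]

theorem sum_vecMul_weightedLaplacian (u : V → R) (M : Matrix V V R) :
    ∑ j, (u ᵥ* weightedLaplacian M) j = 0 := by
  have hone : weightedLaplacian M *ᵥ 1 = 0 := by
    ext i
    simp [weightedLaplacian, sub_mulVec, mulVec_diagonal]
  rw [← dotProduct_one, ← dotProduct_mulVec, hone, dotProduct_zero]

theorem vecMul_weightedLaplacian_eq_zero_of_nonpos [PartialOrder R] [IsOrderedAddMonoid R]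
    (h : u ᵥ* weightedLaplacian M ≤ 0) : u ᵥ* weightedLaplacian M = 0 :=
  funext fun j => (Finset.sum_eq_zero_iff_of_nonpos fun i _ => h i).mp
    (sum_vecMul_weightedLaplacian u M) j (Finset.mem_univ j)

variable [LinearOrder R] [IsStrictOrderedRing R]

theorem posPart_vecMul_weightedLaplacian_eq_zero (hM : ∀ i j, 0 ≤ M i j)
    (hw : w ᵥ* weightedLaplacian M = 0) : w⁺ ᵥ* weightedLaplacian M = 0 := by
  apply vecMul_weightedLaplacian_eq_zero_of_nonpos
  rw [vecMul_weightedLaplacian, sub_eq_zero] at hw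
  rw [vecMul_weightedLaplacian, sub_nonpos]
  intro j
  have hdeg : 0 ≤ (M *ᵥ 1) j := dotProduct_nonneg_of_nonneg (hM j) zero_le_one
  calc (w⁺ * (M *ᵥ 1)) j = max ((w * (M *ᵥ 1)) j) 0 := by
        simp [posPart_def, max_mul_of_nonneg _ _ hdeg]
    _ = max ((w ᵥ* M) j) 0 := by rw [hw]
    _ ≤ (w⁺ ᵥ* M) j := max_le
      (dotProduct_le_dotProduct_of_nonneg_right (le_posPart w) fun i => hM i j)
      (dotProduct_nonneg_of_nonneg (posPart_nonneg w) fun i => hM i j)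

theorem stmt2_general (hM : ∀ i j, 0 ≤ M i j)
    (hconn : ∀ i j, Relation.ReflTransGen (fun a b => 0 < M a b) i j)
    (hw₀ : w ≠ 0) (hw : w ᵥ* weightedLaplacian M = 0) :
    (∀ i, 0 < w i) ∨ (∀ i, w i < 0) := by
  have forall_pos {u : V → R} (hu : 0 ≤ u) (hu₀ : u ≠ 0) (hker : u ᵥ* weightedLaplacian M = 0) :
      ∀ i, 0 < u i :=
    forall_pos_of_vecMul_le hM hconn hu hu₀
      (sub_eq_zero.mp ((vecMul_weightedLaplacian u M).symm.trans hker)).ge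
  by_cases hpos : w⁺ = 0
  · right
    have hneg : 0 ≤ -w := neg_nonneg.mpr (posPart_eq_zero.mp hpos)
    have hker : (-w) ᵥ* weightedLaplacian M = 0 := by rw [neg_vecMul, hw, neg_zero]
    exact fun i => neg_pos.mp (forall_pos hneg (neg_ne_zero.mpr hw₀) hker i)
  · left
    have hker := posPart_vecMul_weightedLaplacian_eq_zero hM hw
    exact fun i => posPart_pos_iff.mp (forall_pos (posPart_nonneg w) hpos hker i)

end WeightedLaplacian

section Multigraph

variable {n : ℕ} {A : Matrix (Fin (n + 1)) (Fin (n + 1)) ℕ}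

theorem lap_map_intCast (R : Type*) [Ring R] (A : Matrix (Fin (n + 1)) (Fin (n + 1)) ℕ) :
    (lap A).map (Int.cast : ℤ → R) = weightedLaplacian (A.map Nat.cast) := by
  ext i j
  obtain rfl | hij := eq_or_ne i j <;> simp [lap, weightedLaplacian, mulVec, dotProduct, *]

theorem StronglyConnected.reflTransGen_map_natCast (R : Type*) [Semiring R] [PartialOrder R]
    [IsStrictOrderedRing R] (hA : StronglyConnected A) (i j : Fin (n + 1)) :
    Relation.ReflTransGen (fun a b => 0 < A.map (Nat.cast : ℕ → R) a b) i j := by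
  simp only [map_apply, Nat.cast_pos]
  obtain rfl | hij := eq_or_ne i j
  · exact .refl
  · exact (hA i j hij).to_reflTransGen

end Multigraph

theorem stmt2 (n : ℕ) (hn : 1 ≤ n) (A : Matrix (Fin (n+1)) (Fin (n+1)) ℕ)
    (hdiag : ∀ i, A i i = 0) (hsc : StronglyConnected A)
    (w : Fin (n+1) → ℝ) (hw : w ≠ 0)
    (hker : Matrix.vecMul w ((lap A).map (fun z => (z : ℝ))) = 0) :
    (∀ i, 0 < w i) ∨ (∀ i, w i < 0) :=
  stmt2_general (fun _ _ => Nat.cast_nonneg _) (hsc.reflTransGen_map_natCast ℝ) hw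
    (lap_map_intCast ℝ A ▸ hker)
end

section
/- Let m ≥ 1 and let L be an additive subgroup of ℤ^m (functions Fin m → ℤ) of rank m. Then there exists an integer matrix M : Matrix (Fin m) (Fin m) ℤ such that: (i) the rows of M form a ℤ-basis of L; (ii) M i j ≤ 0 for all i ≠ j; (iii) every row sum ∑_j M i j is nonnegative; and (iv) for every index i there is a finite sequence i = i_0, i_1, …, i_r in Fin m with M i_t i_{t+1} < 0 for each t < r and with ∑_j M i_r j > 0. (Conditions (ii)–(iv) say exactly that M is the reduced Laplacian of a directed multigraph on vertices {v_0, v_1, …, v_m}, obtained by deleting the row and column of v_0, in which v_0 is globally reachable, i.e., every vertex has a directed path to v_0.) -/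
open Matrix

/-!
Let `P` be the reduced Laplacian of the directed path `v_m → ⋯ → v_1 → v_0`; it is unimodular, and
`(s ᵥ* P) j = s j - s (j + 1)`. Choose an upper triangular basis `H` of the lattice `L P⁻¹` with
positive diagonal, as for the Hermite normal form, and put `M = H P`, a basis of `L`. The row sums
of `M` form the first column of `H`. To the left of the diagonal, row `i` of `M` vanishes except
that its entry in column `i - 1` is `-H i i`, which gives the path from `v_i` to `v_0`. Entries to
the right of the diagonal are made nonpositive by subtracting vectors of `N ℤ^m` which vanish in
the coordinates up to `i`, where `N > 0` is such that the lattice contains `N ℤ^m`.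
-/

section PivotVector

variable {R ι : Type*} [CommRing R] [LinearOrder ι] {L : Submodule R (ι → R)} {i : ι} {x y : ι → R}

/-- A possible `i`-th row of an upper triangular basis of `L`, as in the Hermite normal form: the
entry `x i` generates the ideal of `i`-th coordinates of vectors of `L` whose earlier coordinates
vanish. This entry may be zero, and the entries after it are not reduced. -/
structure IsPivotVector (L : Submodule R (ι → R)) (i : ι) (x : ι → R) : Prop where
  mem : x ∈ L
  apply_eq_zero : ∀ j < i, x j = 0
  dvd : ∀ y ∈ L, (∀ j < i, y j = 0) → x i ∣ y i

theorem exists_isPivotVector [IsPrincipalIdealRing R] (L : Submodule R (ι → R)) (i : ι) :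
    ∃ x, IsPivotVector L i x := by
  let K : Submodule R (ι → R) := L ⊓ Submodule.pi (Set.Iio i) fun _ => ⊥
  have mem_K (y : ι → R) : y ∈ K ↔ y ∈ L ∧ ∀ j < i, y j = 0 := by simp [K, Submodule.mem_pi]
  let I : Ideal R := K.map (LinearMap.proj i)
  obtain ⟨x, hxK, hx⟩ : Submodule.IsPrincipal.generator I ∈ I :=
    Submodule.IsPrincipal.generator_mem I
  obtain ⟨hxL, hx_zero⟩ := (mem_K x).1 hxK
  refine ⟨x, hxL, hx_zero, fun y hyL hy_zero => ?_⟩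
  have hyI : y i ∈ I := Submodule.mem_map_of_mem ((mem_K y).2 ⟨hyL, hy_zero⟩)
  rw [LinearMap.proj_apply] at hx
  rw [hx]
  exact (Submodule.IsPrincipal.mem_iff_generator_dvd I).1 hyI

namespace IsPivotVector

theorem neg (hx : IsPivotVector L i x) : IsPivotVector L i (-x) where
  mem := L.neg_mem hx.mem
  apply_eq_zero j hj := by rw [Pi.neg_apply, hx.apply_eq_zero j hj, neg_zero]
  dvd y hyL hy := neg_dvd.2 (hx.dvd y hyL hy)

theorem sub (hx : IsPivotVector L i x) (hyL : y ∈ L) (hy : ∀ j ≤ i, y j = 0) :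
    IsPivotVector L i (x - y) where
  mem := L.sub_mem hx.mem hyL
  apply_eq_zero j hj := by rw [Pi.sub_apply, hx.apply_eq_zero j hj, hy j hj.le, sub_zero]
  dvd z hzL hz := by
    rw [Pi.sub_apply, hy i le_rfl, sub_zero]
    exact hx.dvd z hzL hz

theorem apply_self_ne_zero (hx : IsPivotVector L i x) {a : R} (ha : a ≠ 0)
    (haL : Pi.single i a ∈ L) : x i ≠ 0 := fun hxi => by
  have hdvd : x i ∣ a := by
    simpa using hx.dvd _ haL fun j hj => by simp [hj.ne]
  exact ha (zero_dvd_iff.1 (hxi ▸ hdvd))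

theorem span_range_le {b : ι → ι → R} (hb : ∀ i, IsPivotVector L i (b i)) :
    Submodule.span R (Set.range b) ≤ L :=
  Submodule.span_le.2 (Set.range_subset_iff.2 fun i => (hb i).mem)

theorem exists_mem_span_eqOn {b : ι → ι → R} (hb : ∀ i, IsPivotVector L i (b i)) (hyL : y ∈ L)
    (s : Finset ι) (hs : IsLowerSet (s : Set ι)) :
    ∃ p ∈ Submodule.span R (Set.range b), Set.EqOn p y s := by
  induction s using Finset.induction_on_max with
  | empty => exact ⟨0, Submodule.zero_mem _, by simp⟩
  | insert i s hs_lt ih =>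
    have mem_of_lt (j : ι) (hj : j < i) : j ∈ s :=
      Finset.mem_of_mem_insert_of_ne
        (Finset.mem_coe.1 (hs hj.le (Finset.mem_coe.2 (Finset.mem_insert_self i s)))) hj.ne
    obtain ⟨p, hp, hp_eq⟩ := ih fun j k hkj hj => mem_of_lt k (hkj.trans_lt (hs_lt j hj))
    have hpL : p ∈ L := span_range_le hb hp
    obtain ⟨c, hc⟩ : b i i ∣ (y - p) i := (hb i).dvd _ (L.sub_mem hyL hpL) fun j hj => by
      rw [Pi.sub_apply, hp_eq (mem_of_lt j hj), sub_self]
    have hbi : b i ∈ Submodule.span R (Set.range b) :=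
      Submodule.subset_span (Set.mem_range_self i)
    refine ⟨p + c • b i, Submodule.add_mem _ hp (Submodule.smul_mem _ c hbi), fun j hj => ?_⟩
    rcases Finset.mem_insert.1 hj with rfl | hj
    · rw [Pi.add_apply, Pi.smul_apply, smul_eq_mul, mul_comm, ← hc, Pi.sub_apply,
        add_sub_cancel]
    · simp [hp_eq hj, (hb i).apply_eq_zero j (hs_lt j hj)]

theorem span_range_eq [Finite ι] {b : ι → ι → R} (hb : ∀ i, IsPivotVector L i (b i)) :
    Submodule.span R (Set.range b) = L := by
  cases nonempty_fintype ι
  refine le_antisymm (span_range_le hb) fun y hyL => ?_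
  obtain ⟨p, hp, hp_eq⟩ :=
    exists_mem_span_eqOn hb hyL Finset.univ (by simpa using isLowerSet_univ)
  rw [Finset.coe_univ, Set.eqOn_univ] at hp_eq
  exact hp_eq ▸ hp

end IsPivotVector

end PivotVector

theorem linearIndependent_row_of_isUpperTriangular {R ι : Type*} [CommRing R] [IsDomain R]
    [LinearOrder ι] [Finite ι] {H : Matrix ι ι R} (hH : H.IsUpperTriangular)
    (hdiag : ∀ i, H i i ≠ 0) : LinearIndependent R H.row := by
  cases nonempty_fintype ι
  refine linearIndependent_rows_of_det_ne_zero (A := H) ?_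
  rw [det_of_isUpperTriangular hH]
  exact Finset.prod_ne_zero_iff.2 fun i _ => hdiag i

theorem apply_nonneg_of_le {ι α : Type*} [PartialOrder ι] [Preorder α] [Zero α] {s : ι → α}
    {i k : ι} (hs : ∀ j < i, s j = 0) (hi : 0 ≤ s i) (hk : k ≤ i) : 0 ≤ s k :=
  hk.lt_or_eq.elim (fun h => (hs k h).ge) fun h => h ▸ hi

section PathLaplacian

variable {R : Type*} [CommRing R] {m : ℕ}

/-- The map `s ↦ s ᵥ* P`, where `P` is the reduced Laplacian of the directed path
`v_m → ⋯ → v_1 → v_0` and vertex `v_{i+1}` is `i : Fin m`. Entrywise it is `s j - s (j + 1)`, with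
`s` continued by `0` past its last coordinate. -/
def pathLaplacian (R : Type*) [CommRing R] (m : ℕ) : (Fin m → R) →ₗ[R] (Fin m → R) where
  toFun s j := s j - Fin.snoc (α := fun _ => R) s 0 j.succ
  map_add' s t := by
    ext j
    cases h : j.succ using Fin.lastCases <;> simp [h, add_sub_add_comm]
  map_smul' c s := by
    ext j
    cases h : j.succ using Fin.lastCases <;> simp [h, mul_sub]

theorem pathLaplacian_apply (s : Fin m → R) (j : Fin m) :
    pathLaplacian R m s j = s j - Fin.snoc (α := fun _ => R) s 0 j.succ := rfl

theorem pathLaplacian_apply_of_val_eq_add_one (s : Fin m → R) {i j : Fin m}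
    (hij : (i : ℕ) = j + 1) : pathLaplacian R m s j = s j - s i := by
  have hsucc : j.succ = i.castSucc := Fin.ext hij.symm
  rw [pathLaplacian_apply, hsucc, Fin.snoc_castSucc]

theorem pathLaplacian_apply_of_val_add_one_eq (s : Fin m → R) {j : Fin m} (hj : (j : ℕ) + 1 = m) :
    pathLaplacian R m s j = s j := by
  have hsucc : j.succ = Fin.last m := Fin.ext hj
  rw [pathLaplacian_apply, hsucc, Fin.snoc_last, sub_zero]

theorem exists_val_eq_add_one_or_val_add_one_eq (j : Fin m) :
    (∃ i : Fin m, (i : ℕ) = j + 1) ∨ (j : ℕ) + 1 = m :=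
  (Nat.lt_or_eq_of_le j.isLt).imp_left fun hj => ⟨⟨j + 1, hj⟩, rfl⟩

theorem pathLaplacian_apply_congr {s t : Fin m → R} {j : Fin m} (hst : ∀ k ≥ j, s k = t k) :
    pathLaplacian R m s j = pathLaplacian R m t j := by
  rcases exists_val_eq_add_one_or_val_add_one_eq j with ⟨i, hi⟩ | hj
  · rw [pathLaplacian_apply_of_val_eq_add_one s hi, pathLaplacian_apply_of_val_eq_add_one t hi,
      hst j le_rfl, hst i (Fin.le_def.2 (by lia))]
  · rw [pathLaplacian_apply_of_val_add_one_eq s hj, pathLaplacian_apply_of_val_add_one_eq t hj,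
      hst j le_rfl]

theorem pathLaplacian_surjective : Function.Surjective (pathLaplacian R m) := by
  intro v
  refine ⟨fun j => ∑ k ∈ Finset.Ici j, v k, funext fun j => ?_⟩
  have hIci : ∑ k ∈ Finset.Ici j, v k = v j + ∑ k ∈ Finset.Ioi j, v k :=
    (Finset.add_sum_Ioi_eq_sum_Ici j).symm
  rcases exists_val_eq_add_one_or_val_add_one_eq j with ⟨i, hi⟩ | hj
  · have hIoi : Finset.Ioi j = Finset.Ici i := by
      ext k
      rw [Finset.mem_Ioi, Finset.mem_Ici, Fin.lt_def, Fin.le_def, hi, Nat.succ_le_iff]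
    rw [pathLaplacian_apply_of_val_eq_add_one _ hi, hIci, hIoi, add_sub_cancel_right]
  · have hIoi : Finset.Ioi j = ∅ :=
      Finset.Ioi_eq_empty.2 fun k _ => Fin.le_def.2 (by lia)
    rw [pathLaplacian_apply_of_val_add_one_eq _ hj, hIci, hIoi, Finset.sum_empty, add_zero]

theorem pathLaplacian_injective : Function.Injective (pathLaplacian R m) :=
  OrzechProperty.injective_of_surjective_endomorphism _ pathLaplacian_surjective

theorem sum_pathLaplacian [NeZero m] (s : Fin m → R) : ∑ j, pathLaplacian R m s j = s 0 := by
  have telescope := (Fin.sum_univ_succ (Fin.snoc (α := fun _ => R) s 0)).symm.trans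
    (Fin.sum_univ_castSucc _)
  simp only [Fin.snoc_castSucc, Fin.snoc_last, Fin.snoc_apply_zero] at telescope
  simp only [pathLaplacian_apply, Finset.sum_sub_distrib]
  linear_combination -telescope

theorem pathLaplacian_apply_of_apply_eq_zero {s : Fin m → R} {i j : Fin m}
    (hs : ∀ k < i, s k = 0) (hij : (i : ℕ) = j + 1) : pathLaplacian R m s j = -s i := by
  rw [pathLaplacian_apply_of_val_eq_add_one s hij, hs j (Fin.lt_def.2 (by lia)), zero_sub]

theorem pathLaplacian_apply_nonpos_of_lt [PartialOrder R] [IsOrderedRing R] {s : Fin m → R}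
    {i j : Fin m} (hs : ∀ k < i, s k = 0) (hi : 0 ≤ s i) (hj : j < i) :
    pathLaplacian R m s j ≤ 0 := by
  obtain ⟨k, hk⟩ : ∃ k : Fin m, (k : ℕ) = j + 1 := ⟨⟨j + 1, by lia⟩, rfl⟩
  have hki : k ≤ i := Fin.le_def.2 (by lia)
  rw [pathLaplacian_apply_of_apply_eq_zero (fun l hl => hs l (hl.trans_le hki)) hk]
  exact neg_nonpos.2 (apply_nonneg_of_le hs hi hki)

theorem sum_pathLaplacian_nonneg [Preorder R] [NeZero m] {s : Fin m → R} {i : Fin m}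
    (hs : ∀ j < i, s j = 0) (hi : 0 ≤ s i) : 0 ≤ ∑ j, pathLaplacian R m s j :=
  (apply_nonneg_of_le hs hi (Fin.zero_le i)).trans_eq (sum_pathLaplacian s).symm

end PathLaplacian

theorem exists_pos_smul_mem_of_finrank_eq {M : Type*} [AddCommGroup M] [Module.Free ℤ M]
    [Module.Finite ℤ M] (L : Submodule ℤ M) (hrank : Module.finrank ℤ L = Module.finrank ℤ M) :
    ∃ N : ℤ, 0 < N ∧ ∀ x, N • x ∈ L := by
  have := L.finiteQuotientOfFreeOfRankEq hrank
  have hindex : L.toAddSubgroup.index ≠ 0 := Nat.card_ne_zero.2 ⟨⟨0⟩, this⟩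
  refine ⟨L.toAddSubgroup.index, by lia, fun x => ?_⟩
  rw [natCast_zsmul]
  exact L.toAddSubgroup.nsmul_index_mem x

theorem exists_isPivotVector_pos {ι : Type*} [LinearOrder ι] {L : Submodule ℤ (ι → ℤ)} {a : ℤ}
    {i : ι} (ha : a ≠ 0) (haL : Pi.single i a ∈ L) : ∃ x, IsPivotVector L i x ∧ 0 < x i := by
  obtain ⟨x, hx⟩ := exists_isPivotVector L i
  rcases (hx.apply_self_ne_zero ha haL).lt_or_gt with hneg | hpos
  · exact ⟨-x, hx.neg, neg_pos.2 hneg⟩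
  · exact ⟨x, hx, hpos⟩

theorem exists_isPivotVector_pathLaplacian_nonpos {m : ℕ} {L : Submodule ℤ (Fin m → ℤ)} {N : ℤ}
    (hN : 0 < N) (hNL : ∀ x, N • x ∈ L) (i : Fin m) :
    ∃ x, IsPivotVector L i x ∧ 0 < x i ∧ ∀ k > i, pathLaplacian ℤ m x k ≤ 0 := by
  have hsingle : Pi.single i N ∈ L := by simpa [← Pi.single_smul] using hNL (Pi.single i 1)
  obtain ⟨x, hx, hxi⟩ := exists_isPivotVector_pos hN.ne' hsingle
  obtain ⟨w, hw⟩ := pathLaplacian_surjective |pathLaplacian ℤ m x|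
  let z : Fin m → ℤ := fun j => if j ≤ i then 0 else w j
  have hz (j : Fin m) (hj : j ≤ i) : (N • z) j = 0 := by simp [z, hj]
  have hz_abs (k : Fin m) (hk : i < k) : pathLaplacian ℤ m z k = |pathLaplacian ℤ m x k| := by
    rw [pathLaplacian_apply_congr (t := w) fun j hj => if_neg (hk.trans_le hj).not_ge, hw,
      Pi.abs_apply]
  refine ⟨x - N • z, hx.sub (hNL z) hz, ?_, fun k hk => ?_⟩
  · rwa [Pi.sub_apply, hz i le_rfl, sub_zero]
  · calc pathLaplacian ℤ m (x - N • z) k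
        = pathLaplacian ℤ m x k - N * |pathLaplacian ℤ m x k| := by
          rw [map_sub, map_smul, Pi.sub_apply, Pi.smul_apply, hz_abs k hk, smul_eq_mul]
      _ ≤ 0 := sub_nonpos.2 <| (le_abs_self _).trans <|
          le_mul_of_one_le_left (abs_nonneg _) (Int.add_one_le_iff.2 hN)

theorem exists_chain_to_zero {m : ℕ} [NeZero m] {r : Fin m → Fin m → Prop}
    (hr : ∀ i j : Fin m, (i : ℕ) = j + 1 → r i j) (i : Fin m) :
    ∃ n : ℕ, ∃ seq : Fin (n + 1) → Fin m, seq 0 = i ∧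
      (∀ t : Fin n, r (seq t.castSucc) (seq t.succ)) ∧ seq (Fin.last n) = 0 := by
  refine ⟨i, fun t => ⟨i - t, by lia⟩, by simp, fun t => hr _ _ ?_, by simp⟩
  simp only [Fin.val_castSucc, Fin.val_succ]
  lia

theorem stmt3 (m : ℕ) (hm : 1 ≤ m) (L : Submodule ℤ (Fin m → ℤ))
    (hrank : Module.finrank ℤ L = m) :
    ∃ M : Matrix (Fin m) (Fin m) ℤ,
      -- (i) the rows of `M` form a `ℤ`-basis of `L`
      LinearIndependent ℤ (fun i => M i) ∧
      Submodule.span ℤ (Set.range (fun i => M i)) = L ∧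
      -- (ii) off-diagonal entries are nonpositive
      (∀ i j, i ≠ j → M i j ≤ 0) ∧
      -- (iii) all row sums are nonnegative
      (∀ i, 0 ≤ ∑ j, M i j) ∧
      -- (iv) from every row one can reach, following negative entries,
      -- a row with strictly positive row sum
      (∀ i : Fin m, ∃ r : ℕ, ∃ seq : Fin (r+1) → Fin m, seq 0 = i ∧
        (∀ t : Fin r, M (seq t.castSucc) (seq t.succ) < 0) ∧
        0 < ∑ j, M (seq (Fin.last r)) j) := by
  have : NeZero m := ⟨Nat.one_le_iff_ne_zero.1 hm⟩
  obtain ⟨N, hN, hNL⟩ := exists_pos_smul_mem_of_finrank_eq L (by simpa using hrank)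
  choose H hH hH_pos hH_nonpos using exists_isPivotVector_pathLaplacian_nonpos
    (L := L.comap (pathLaplacian ℤ m)) hN fun x => by
      rw [Submodule.mem_comap, map_smul]
      exact hNL _
  have hH_pred (i j : Fin m) (hij : (i : ℕ) = j + 1) : pathLaplacian ℤ m (H i) j < 0 := by
    rw [pathLaplacian_apply_of_apply_eq_zero (hH i).apply_eq_zero hij]
    exact neg_neg_of_pos (hH_pos i)
  refine ⟨of fun i => pathLaplacian ℤ m (H i), ?_, ?_, fun i j hij => ?_, fun i => ?_, fun i => ?_⟩
  · exact (linearIndependent_row_of_isUpperTriangular (H := of H) (fun i => (hH i).apply_eq_zero)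
      fun i => (hH_pos i).ne').map_injOn _ pathLaplacian_injective.injOn
  · change Submodule.span ℤ (Set.range (pathLaplacian ℤ m ∘ H)) = L
    rw [Set.range_comp, ← Submodule.map_span, IsPivotVector.span_range_eq hH,
      Submodule.map_comap_eq_of_surjective pathLaplacian_surjective]
  · rcases hij.lt_or_gt with hlt | hgt
    · exact hH_nonpos i j hlt
    · exact pathLaplacian_apply_nonpos_of_lt (hH i).apply_eq_zero (hH_pos i).le hgt
  · exact sum_pathLaplacian_nonneg (hH i).apply_eq_zero (hH_pos i).le
  · obtain ⟨n, seq, h0, hstep, hlast⟩ := exists_chain_to_zero hH_pred i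
    exact ⟨n, seq, h0, hstep, by simpa [hlast, sum_pathLaplacian] using hH_pos 0⟩
end

section
/- Let n ≥ 1, let A : Matrix (Fin (n+1)) (Fin (n+1)) ℕ with zero diagonal be the adjacency matrix of a strongly connected directed multigraph with Laplacian Q = D − A, and let Σ : Fin (n+1) → ℤ be a strictly positive vector with Matrix.vecMul Σ Q = 0 whose entries have gcd 1. Let C : Fin (n+1) → ℤ satisfy C i ≥ 0 for all i ≠ 0. Call a finite sequence f_0, …, f_{m−1} of vectors in Fin (n+1) → ℤ admissible if each f_j is nonzero, satisfies 0 ≤ f_j i ≤ Σ i for all i and f_j 0 = 0, and for every prefix length p ≤ m and every i ≠ 0 one has C i − (Matrix.vecMul (∑_{j < p} f_j) Q) i ≥ 0; call it maximal if moreover no vector x ≠ 0 with 0 ≤ x ≤ Σ and x 0 = 0 can be fired from the final configuration D = C − Matrix.vecMul (∑_{j < m} f_j) Q without sending some vertex i ≠ 0 into debt. Then any two maximal admissible sequences f and g yield the same final configuration: C − Matrix.vecMul (∑ f_j) Q = C − Matrix.vecMul (∑ g_j) Q. -/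
/-!
Firing a total `x` leaves vertex `i` out of debt when its net outflow `(x ᵥ* Q) i` does not exceed
`C i`. As the off-diagonal entries of `Q` are nonpositive, raising `x` away from `i` only lowers this
outflow; since `x ⊔ y` agrees at `i` with `x` or with `y`, the debt-free totals are closed under `⊔`.

Let `F` be the total of a maximal sequence, and suppose that a prefix total `G ≤ F` of another
sequence is followed by a firing `g` with `G + g ≰ F`. Then `(G + g) ⊔ F = F + (G + g - F)⁺` is
debt-free, and `0 ≤ (G + g - F)⁺ ≤ g` because `G ≤ F`; so `(G + g - F)⁺` is a nonzero firing that is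
still possible after `F`, a contradiction. Two maximal sequences therefore dominate each other.
-/

open Matrix

/-- `f` is an admissible firing sequence for the configuration `C`:
each firing is nonzero, bounded by `sig`, does not fire the vertex `0`, and
no prefix of firings sends any vertex other than `0` into debt. -/
def Admissible {n : ℕ} (Q : Matrix (Fin (n+1)) (Fin (n+1)) ℤ)
    (sig : Fin (n+1) → ℤ) (C : Fin (n+1) → ℤ)
    {m : ℕ} (f : Fin m → (Fin (n+1) → ℤ)) : Prop :=
  (∀ j, f j ≠ 0 ∧ (∀ i, 0 ≤ f j i ∧ f j i ≤ sig i) ∧ f j 0 = 0) ∧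
  (∀ p : ℕ, p ≤ m → ∀ i, i ≠ 0 →
    0 ≤ C i - Matrix.vecMul (∑ j ∈ Finset.univ.filter (fun j : Fin m => (j : ℕ) < p), f j) Q i)

/-- An admissible firing sequence is maximal if no further nonzero firing `x`
with `0 ≤ x ≤ sig` and `x 0 = 0` can be applied to the final configuration
without sending some vertex other than `0` into debt. -/
def MaximalAdmissible {n : ℕ} (Q : Matrix (Fin (n+1)) (Fin (n+1)) ℤ)
    (sig : Fin (n+1) → ℤ) (C : Fin (n+1) → ℤ)
    {m : ℕ} (f : Fin m → (Fin (n+1) → ℤ)) : Prop :=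
  Admissible Q sig C f ∧
  ¬ ∃ x : Fin (n+1) → ℤ, x ≠ 0 ∧ (∀ i, 0 ≤ x i ∧ x i ≤ sig i) ∧ x 0 = 0 ∧
      (∀ i, i ≠ 0 →
        0 ≤ (C i - Matrix.vecMul (∑ j, f j) Q i) - Matrix.vecMul x Q i)

theorem sum_filter_val_lt_succ {M : Type*} [AddCommMonoid M] {m p : ℕ} (f : Fin m → M)
    (hp : p < m) :
    ∑ j with Fin.val j < p + 1, f j = ∑ j with Fin.val j < p, f j + f ⟨p, hp⟩ := by
  have insert_eq : ({j : Fin m | (j : ℕ) < p + 1} : Finset (Fin m)) =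
      insert ⟨p, hp⟩ ({j : Fin m | (j : ℕ) < p} : Finset (Fin m)) := by
    ext j
    simp only [Finset.mem_filter_univ, Finset.mem_insert, Fin.ext_iff]
    omega
  rw [insert_eq, Finset.sum_insert (by simp), add_comm]

section LatticeOrderedGroup

variable {α : Type*} [AddCommGroup α] [Lattice α] [IsOrderedAddMonoid α] {L : Set α} {F : α}

theorem add_le_of_supClosed_of_forall_eq_zero {G g : α} (hL : SupClosed L) (hF : F ∈ L)
    (hGF : G ≤ F) (hg : 0 ≤ g) (hGg : G + g ∈ L)
    (hmax : ∀ x, 0 ≤ x → x ≤ g → F + x ∈ L → x = 0) : G + g ≤ F := by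
  have excess_le : (G + g - F)⁺ ≤ g :=
    sup_le (sub_le_iff_le_add'.2 (by gcongr)) hg
  have sup_eq : (G + g) ⊔ F = F + (G + g - F)⁺ := sup_eq_add_posPart_sub _ _
  have excess_eq_zero : (G + g - F)⁺ = 0 :=
    hmax _ (posPart_nonneg _) excess_le (sup_eq ▸ hL hGg hF)
  exact sub_nonpos.1 (posPart_eq_zero.1 excess_eq_zero)

theorem sum_le_of_supClosed_of_forall_eq_zero {m : ℕ} {g : Fin m → α} (hL : SupClosed L)
    (hF : F ∈ L) (hF_nonneg : 0 ≤ F) (hg : ∀ j, 0 ≤ g j)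
    (hprefix : ∀ p ≤ m, ∑ j with Fin.val j < p, g j ∈ L)
    (hmax : ∀ j x, 0 ≤ x → x ≤ g j → F + x ∈ L → x = 0) : ∑ j, g j ≤ F := by
  have prefix_le : ∀ p ≤ m, ∑ j with Fin.val j < p, g j ≤ F := by
    intro p hp
    induction p with
    | zero => simpa using hF_nonneg
    | succ p ih =>
      have hmem := hprefix (p + 1) hp
      rw [sum_filter_val_lt_succ g hp] at hmem ⊢
      exact add_le_of_supClosed_of_forall_eq_zero hL hF (ih (Nat.le_of_succ_le hp)) (hg _) hmem
        (hmax _)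
  simpa using prefix_le m le_rfl

end LatticeOrderedGroup

section DebtFree

variable {ι R : Type*} [Fintype ι] [Ring R]

theorem vecMul_apply_le_vecMul_apply [PartialOrder R] [IsOrderedRing R] {Q : Matrix ι ι R}
    (hQ : Pairwise (Q · · ≤ 0)) {x y : ι → R} {i : ι} (hxy : x ≤ y) (hi : x i = y i) :
    (y ᵥ* Q) i ≤ (x ᵥ* Q) i := by
  refine Finset.sum_le_sum fun k _ ↦ ?_
  obtain rfl | hki := eq_or_ne k i
  · rw [hi]
  · exact mul_le_mul_of_nonpos_right (hxy k) (hQ hki)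

/-- The firing vectors `x` that, fired from the configuration `C`, leave no vertex of `S` in debt.
Membership does not require `0 ≤ x`. -/
def debtFree [LE R] (Q : Matrix ι ι R) (S : Set ι) (C : ι → R) : Set (ι → R) :=
  {x | ∀ i ∈ S, 0 ≤ C i - (x ᵥ* Q) i}

theorem supClosed_debtFree [LinearOrder R] [IsOrderedRing R] {Q : Matrix ι ι R}
    (hQ : Pairwise (Q · · ≤ 0)) (S : Set ι) (C : ι → R) : SupClosed (debtFree Q S C) := by
  intro x hx y hy i hiS
  obtain h | h := le_total (x i) (y i)
  · exact (hy i hiS).trans <| sub_le_sub_left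
      (vecMul_apply_le_vecMul_apply hQ le_sup_right (sup_eq_right.2 h).symm) _
  · exact (hx i hiS).trans <| sub_le_sub_left
      (vecMul_apply_le_vecMul_apply hQ le_sup_left (sup_eq_left.2 h).symm) _

end DebtFree

section FiringSequences

variable {n m m₁ m₂ : ℕ} {Q : Matrix (Fin (n + 1)) (Fin (n + 1)) ℤ} {sig C : Fin (n + 1) → ℤ}

theorem pairwise_lap_nonpos (A : Matrix (Fin (n + 1)) (Fin (n + 1)) ℕ) :
    Pairwise (lap A · · ≤ 0) := by
  intro i j hij
  simp [lap, Matrix.diagonal_apply_ne _ hij]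

theorem Admissible.nonneg {f : Fin m → Fin (n + 1) → ℤ} (hf : Admissible Q sig C f) (j : Fin m) :
    0 ≤ f j :=
  fun i ↦ ((hf.1 j).2.1 i).1

theorem Admissible.sum_mem_debtFree {f : Fin m → Fin (n + 1) → ℤ} (hf : Admissible Q sig C f) :
    ∑ j, f j ∈ debtFree Q {0}ᶜ C := by
  intro i hi
  simpa using hf.2 m le_rfl i hi

theorem MaximalAdmissible.eq_zero_of_add_mem_debtFree {f : Fin m → Fin (n + 1) → ℤ}
    (hf : MaximalAdmissible Q sig C f) {x : Fin (n + 1) → ℤ} (hx : 0 ≤ x) (hx_sig : x ≤ sig)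
    (hx_zero : x 0 = 0) (hmem : ∑ j, f j + x ∈ debtFree Q {0}ᶜ C) : x = 0 := by
  by_contra hne
  refine hf.2 ⟨x, hne, fun i ↦ ⟨hx i, hx_sig i⟩, hx_zero, fun i hi ↦ ?_⟩
  simpa only [Matrix.add_vecMul, Pi.add_apply, sub_sub] using hmem i hi

theorem MaximalAdmissible.sum_le_sum (hQ : Pairwise (Q · · ≤ 0))
    {f : Fin m₁ → Fin (n + 1) → ℤ} {g : Fin m₂ → Fin (n + 1) → ℤ}
    (hf : MaximalAdmissible Q sig C f) (hg : Admissible Q sig C g) : ∑ j, g j ≤ ∑ j, f j := by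
  refine sum_le_of_supClosed_of_forall_eq_zero (supClosed_debtFree hQ {0}ᶜ C)
    hf.1.sum_mem_debtFree (Finset.sum_nonneg fun j _ ↦ hf.1.nonneg j) hg.nonneg hg.2 ?_
  intro j x hx hxg hmem
  obtain ⟨-, hg_bounds, hg_zero⟩ := hg.1 j
  exact hf.eq_zero_of_add_mem_debtFree hx (fun i ↦ (hxg i).trans (hg_bounds i).2)
    (le_antisymm ((hxg 0).trans_eq hg_zero) (hx 0)) hmem

theorem stmt6_general (hQ : Pairwise (Q · · ≤ 0))
    {f : Fin m₁ → Fin (n + 1) → ℤ} {g : Fin m₂ → Fin (n + 1) → ℤ}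
    (hf : MaximalAdmissible Q sig C f) (hg : MaximalAdmissible Q sig C g) :
    ∑ j, f j = ∑ j, g j :=
  le_antisymm (hg.sum_le_sum hQ hf.1) (hf.sum_le_sum hQ hg.1)

end FiringSequences

theorem stmt6 (n : ℕ) (hn : 1 ≤ n) (A : Matrix (Fin (n+1)) (Fin (n+1)) ℕ)
    (hdiag : ∀ i, A i i = 0) (hsc : StronglyConnected A)
    (sig : Fin (n+1) → ℤ) (hpos : ∀ i, 0 < sig i)
    (hker : Matrix.vecMul sig (lap A) = 0)
    (hgcd : Finset.univ.gcd sig = 1)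
    (C : Fin (n+1) → ℤ) (hC : ∀ i, i ≠ 0 → 0 ≤ C i)
    (m₁ m₂ : ℕ) (f : Fin m₁ → (Fin (n+1) → ℤ)) (g : Fin m₂ → (Fin (n+1) → ℤ))
    (hf : MaximalAdmissible (lap A) sig C f)
    (hg : MaximalAdmissible (lap A) sig C g) :
    C - Matrix.vecMul (∑ j, f j) (lap A) = C - Matrix.vecMul (∑ j, g j) (lap A) := by
  rw [stmt6_general (pairwise_lap_nonpos A) hf hg]
end

section
/- Let K be a field and k ≥ 1 a natural number. Let I_k be the ideal of K[x_0, x_1, x_2, x_3] generated by the three binomials x_0^k x_2 x_3 − x_1^{k+2}, x_0 x_1^k x_3 − x_2^{k+2}, and x_0 x_1 x_2^k − x_3^{k+2}. Then the binomial x_1^2 x_2^{k+1} − x_0^{k+1} x_3^2 lies in the saturation of I_k with respect to the product of the variables: there exists e : ℕ such that (x_0 x_1 x_2 x_3)^e · (x_1^2 x_2^{k+1} − x_0^{k+1} x_3^2) ∈ I_k. -/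
open MvPolynomial

/-- The ideal `I_k` of `K[x_0,x_1,x_2,x_3]` generated by the deformed binomials
`x_0^k x_2 x_3 − x_1^{k+2}`, `x_0 x_1^k x_3 − x_2^{k+2}`, `x_0 x_1 x_2^k − x_3^{k+2}`. -/
noncomputable def Ik (K : Type*) [Field K] (k : ℕ) : Ideal (MvPolynomial (Fin 4) K) :=
  Ideal.span {X 0 ^ k * X 2 * X 3 - X 1 ^ (k+2),
              X 0 * X 1 ^ k * X 3 - X 2 ^ (k+2),
              X 0 * X 1 * X 2 ^ k - X 3 ^ (k+2)}

/-!
Up to sign, the exponent vector of `x₁² x₂ᵏ⁺¹ - x₀ᵏ⁺¹ x₃²` is the sum of those of the first two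
generators. Multiplying the congruences `x₀ᵏ x₂ x₃ ≡ x₁ᵏ⁺²` and `x₀ x₁ᵏ x₃ ≡ x₂ᵏ⁺²` therefore
gives this binomial times the common factor `x₁ᵏ x₂` of the two products, which divides a power of
`x₀ x₁ x₂ x₃`.
-/

theorem mul_sub_mem_of_mul_eq_mul {R : Type*} [Ring R] {I : Ideal R} [I.IsTwoSided]
    {a b c d m p q : R} (hab : a - b ∈ I) (hcd : c - d ∈ I) (hac : a * c = m * p)
    (hbd : b * d = m * q) :
    m * (p - q) ∈ I := by
  rw [mul_sub, ← hac, ← hbd]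
  exact I.mul_sub_mul_mem hab hcd

section CommRing

variable {R : Type*} [CommRing R] {I : Ideal R} {x₀ x₁ x₂ x₃ : R} {k : ℕ}

theorem pow_mul_mul_sub_mem (h₁ : x₀ ^ k * x₂ * x₃ - x₁ ^ (k + 2) ∈ I)
    (h₂ : x₀ * x₁ ^ k * x₃ - x₂ ^ (k + 2) ∈ I) :
    x₁ ^ k * x₂ * (x₁ ^ 2 * x₂ ^ (k + 1) - x₀ ^ (k + 1) * x₃ ^ 2) ∈ I :=
  mul_sub_mem_of_mul_eq_mul (sub_mem_comm_iff.mp h₁) (sub_mem_comm_iff.mp h₂) (by ring) (by ring)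

theorem stmt8_general (h₁ : x₀ ^ k * x₂ * x₃ - x₁ ^ (k + 2) ∈ I)
    (h₂ : x₀ * x₁ ^ k * x₃ - x₂ ^ (k + 2) ∈ I) :
    (x₀ * x₁ * x₂ * x₃) ^ (k + 1) * (x₁ ^ 2 * x₂ ^ (k + 1) - x₀ ^ (k + 1) * x₃ ^ 2) ∈ I := by
  have h_dvd : x₁ ^ k * x₂ ∣ (x₀ * x₁ * x₂ * x₃) ^ (k + 1) :=
    ⟨x₀ ^ (k + 1) * x₁ * x₂ ^ k * x₃ ^ (k + 1), by ring⟩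
  exact I.mem_of_dvd (mul_dvd_mul_right h_dvd _) (pow_mul_mul_sub_mem h₁ h₂)

end CommRing

theorem stmt8 (K : Type*) [Field K] (k : ℕ) (hk : 1 ≤ k) :
    ∃ e : ℕ, (X 0 * X 1 * X 2 * X 3 : MvPolynomial (Fin 4) K) ^ e *
      (X 1 ^ 2 * X 2 ^ (k+1) - X 0 ^ (k+1) * X 3 ^ 2) ∈ Ik K k :=
  ⟨k + 1, stmt8_general (Ideal.subset_span (by simp)) (Ideal.subset_span (by simp))⟩
end

section
/- Let K be a field and k ≥ 1 a natural number. Let I_k be the ideal of K[x_0, x_1, x_2, x_3] generated by the three binomials x_0^k x_2 x_3 − x_1^{k+2}, x_0 x_1^k x_3 − x_2^{k+2}, and x_0 x_1 x_2^k − x_3^{k+2}. Then the binomial x_1^2 x_2^{k+1} − x_0^{k+1} x_3^2 does not belong to I_k. -/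
/-!
The monomial ideal `(x_0, x_1^3, x_2^(k+2), x_3)` contains every monomial occurring
in the generators of `I_k`, as well as `x_0^(k+1) x_3^2`. So if the binomial were in `I_k`, then
`x_1^2 x_2^(k+1)` would lie in that monomial ideal, but it is divisible by none of its generators.
-/

open MvPolynomial

section XPowIdeal

/-- The monomial ideal generated by the powers `x_i ^ e_i` of the variables, in which membership
can be read off from exponents. An exponent `e_i = 0` gives the unit ideal; it does not mean that
`x_i` is left out. -/
noncomputable def xPowIdeal {σ : Type*} (R : Type*) [CommSemiring R] (e : σ → ℕ) :
    Ideal (MvPolynomial σ R) :=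
  Ideal.span (Set.range fun i ↦ X i ^ e i)

variable {σ R : Type*} [CommSemiring R] {e : σ → ℕ}

theorem mem_xPowIdeal_iff {p : MvPolynomial σ R} :
    p ∈ xPowIdeal R e ↔ ∀ m ∈ p.support, ∃ i, e i ≤ m i := by
  have range_eq : (Set.range fun i ↦ (X i ^ e i : MvPolynomial σ R)) =
      (fun s ↦ monomial s 1) '' Set.range fun i ↦ Finsupp.single i (e i) := by
    simp only [← Set.range_comp, Function.comp_def, X_pow_eq_monomial]
  simp only [xPowIdeal, range_eq, mem_ideal_span_monomial_image, Set.exists_range_iff,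
    Finsupp.single_le_iff]

theorem monomial_one_mem_xPowIdeal_iff [Nontrivial R] {m : σ →₀ ℕ} :
    monomial m (1 : R) ∈ xPowIdeal R e ↔ ∃ i, e i ≤ m i := by
  classical
  simp [mem_xPowIdeal_iff, support_monomial]

theorem X_pow_mem_xPowIdeal {i : σ} {n : ℕ} (h : e i ≤ n) :
    (X i ^ n : MvPolynomial σ R) ∈ xPowIdeal R e :=
  Ideal.mem_of_dvd _ (pow_dvd_pow _ h) (Ideal.subset_span ⟨i, rfl⟩)

theorem X_mem_xPowIdeal {i : σ} (h : e i ≤ 1) :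
    (X i : MvPolynomial σ R) ∈ xPowIdeal R e := by
  simpa only [pow_one] using X_pow_mem_xPowIdeal (R := R) h

end XPowIdeal

/-- The ideal `I_k` over an arbitrary commutative ring of coefficients; `Ik K k` is the case of a
field. -/
noncomputable def deformedIdeal (R : Type*) [CommRing R] (k : ℕ) :
    Ideal (MvPolynomial (Fin 4) R) :=
  Ideal.span {X 0 ^ k * X 2 * X 3 - X 1 ^ (k + 2),
              X 0 * X 1 ^ k * X 3 - X 2 ^ (k + 2),
              X 0 * X 1 * X 2 ^ k - X 3 ^ (k + 2)}

theorem deformedIdeal_le_xPowIdeal (R : Type*) [CommRing R] {k : ℕ} (hk : 1 ≤ k) :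
    deformedIdeal R k ≤ xPowIdeal R ![1, 3, k + 2, 1] := by
  have x₀_mem : X 0 ∈ xPowIdeal R ![1, 3, k + 2, 1] := X_mem_xPowIdeal le_rfl
  have x₃_mem : X 3 ∈ xPowIdeal R ![1, 3, k + 2, 1] := X_mem_xPowIdeal le_rfl
  rw [deformedIdeal, Ideal.span_le]
  rintro _ (rfl | rfl | rfl)
  · exact sub_mem (Ideal.mul_mem_left _ _ x₃_mem)
      (X_pow_mem_xPowIdeal (Nat.add_le_add_right hk 2))
  · exact sub_mem (Ideal.mul_mem_left _ _ x₃_mem) (X_pow_mem_xPowIdeal le_rfl)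
  · exact sub_mem (Ideal.mul_mem_right _ _ (Ideal.mul_mem_right _ _ x₀_mem))
      (X_pow_mem_xPowIdeal (Nat.le_add_left 1 (k + 1)))

theorem X_one_sq_mul_X_two_pow_notMem_xPowIdeal
    (R : Type*) [CommSemiring R] [Nontrivial R] (k : ℕ) :
    (X 1 ^ 2 * X 2 ^ (k + 1) : MvPolynomial (Fin 4) R) ∉ xPowIdeal R ![1, 3, k + 2, 1] := by
  rw [X_pow_eq_monomial, X_pow_eq_monomial, monomial_mul, one_mul, monomial_one_mem_xPowIdeal_iff]
  simp [Fin.exists_fin_succ, Finsupp.single_apply]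

theorem stmt9_general (R : Type*) [CommRing R] [Nontrivial R] {k : ℕ} (hk : 1 ≤ k) :
    (X 1 ^ 2 * X 2 ^ (k + 1) - X 0 ^ (k + 1) * X 3 ^ 2 : MvPolynomial (Fin 4) R) ∉
      deformedIdeal R k := by
  intro binomial_mem
  have x₃_sq_mem : X 3 ^ 2 ∈ xPowIdeal R ![1, 3, k + 2, 1] := X_pow_mem_xPowIdeal one_le_two
  exact X_one_sq_mul_X_two_pow_notMem_xPowIdeal R k <|
    (Submodule.sub_mem_iff_left _ (Ideal.mul_mem_left _ _ x₃_sq_mem)).mp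
      (deformedIdeal_le_xPowIdeal R hk binomial_mem)

theorem stmt9 (K : Type*) [Field K] (k : ℕ) (hk : 1 ≤ k) :
    (X 1 ^ 2 * X 2 ^ (k+1) - X 0 ^ (k+1) * X 3 ^ 2 : MvPolynomial (Fin 4) K) ∉ Ik K k :=
  stmt9_general K hk
end

section
/- Let K be a field, n ≥ 1, and let Σ : Fin (n+1) → ℤ be strictly positive with gcd of entries 1. Let C_Σ be the set of real matrices Q : Matrix (Fin (n+1)) (Fin (n+1)) ℝ such that every row sum of Q is zero, Q i j ≤ 0 for all i ≠ j, Matrix.vecMul (fun i => (Σ i : ℝ)) Q = 0, and the support digraph of Q (with an edge from i to j iff i ≠ j and Q i j < 0) is strongly connected. Then the following subset is dense in C_Σ (for the topology induced by any matrix norm on ℝ^{(n+1)×(n+1)}): the set of Q ∈ C_Σ with rational entries for which there exists a nonzero natural number λ such that λ·Q has integer entries and the lattice ideal in K[x_0,…,x_n] of the ℤ-span of the rows of λ·Q is generic. -/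
open Matrix MvPolynomial

/-- The lattice ideal of a set `L ⊆ ℤ^{n+1}`: the ideal of `K[x_0,…,x_n]` generated by
all binomials `x^u - x^v` with `u, v ∈ ℕ^{n+1}` and `u - v ∈ L`. -/
noncomputable def latticeIdeal (K : Type*) [Field K] (n : ℕ)
    (L : Set (Fin (n+1) → ℤ)) : Ideal (MvPolynomial (Fin (n+1)) K) :=
  Ideal.span {p | ∃ u v : Fin (n+1) → ℕ,
    (fun i => (u i : ℤ) - (v i : ℤ)) ∈ L ∧
    p = (∏ i, X i ^ u i) - (∏ i, X i ^ v i)}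

/-- A lattice ideal is generic if it is generated by binomials `x^{u⁺} - x^{u⁻}` where
the vectors `u ∈ L` have full support. -/
def IsGenericLatticeIdeal (K : Type*) [Field K] (n : ℕ)
    (L : Set (Fin (n+1) → ℤ)) : Prop :=
  ∃ S : Finset (Fin (n+1) → ℤ), (↑S : Set (Fin (n+1) → ℤ)) ⊆ L ∧
    (∀ u ∈ S, ∀ i, u i ≠ 0) ∧
    latticeIdeal K n L =
      Ideal.span ((fun u : Fin (n+1) → ℤ =>
        (∏ i, X i ^ (u i).toNat) - (∏ i, X i ^ (-(u i)).toNat) :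
          (Fin (n+1) → ℤ) → MvPolynomial (Fin (n+1)) K) '' ↑S)

/-- The cone `C_Σ` of Laplacians of real edge-weighted strongly connected directed
graphs with left kernel containing `Σ`. -/
def coneCSig (n : ℕ) (sig : Fin (n+1) → ℤ) : Set (Matrix (Fin (n+1)) (Fin (n+1)) ℝ) :=
  {Q | (∀ i, ∑ j, Q i j = 0) ∧
       (∀ i j, i ≠ j → Q i j ≤ 0) ∧
       Matrix.vecMul (fun i => (sig i : ℝ)) Q = 0 ∧
       (∀ i j, i ≠ j → Relation.TransGen (fun a b => a ≠ b ∧ Q a b < 0) i j)}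

/-!
Write the elements of the lattice `L` spanned by the rows of an integer Laplacian `M` as `a ᵥ* M`;
since `σ ᵥ* M = 0`, the script `a` may be taken with `0 ≤ a` and `a k < σ k` for some `k`. If all
off-diagonal entries of `M` are negative, then firing a vertex `j` at which `a / σ` is maximal shows
that either `a` lies in a box depending only on `σ` and the ratios of the entries of `M`, or the
`j`-th row of `M` is strictly below `(a ᵥ* M)⁺`. In the second case the fibre of `x^{u⁺} - x^{u⁻}`,
where `u = a ᵥ* M`, contains a monomial divisible by all variables, so this binomial is a
combination of multiples of binomials of smaller degree. Hence `L` is generic once the finitely many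
nonzero `a ᵥ* M` with `a` in the box have full support. This last condition excludes finitely many
hyperplanes in the rational space of matrices killed by `σ` on the left and by `1` on the right, so
it holds at a dense set of rational points; every Laplacian is a limit of Laplacians with negative
off-diagonal entries.
-/

section Fiber

variable {ι : Type*}

/-- Two exponent vectors lie in the same fibre of `L` when their difference is in `L`; these are
the pairs whose binomials generate the lattice ideal of `L`. -/
def SameFiber (L : Submodule ℤ (ι → ℤ)) (u v : ι → ℕ) : Prop :=
  (fun i => (u i : ℤ) - v i) ∈ L

namespace SameFiber

variable {L : Submodule ℤ (ι → ℤ)} {u v w : ι → ℕ}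

theorem symm (h : SameFiber L u v) : SameFiber L v u := by
  simpa only [SameFiber, Pi.neg_def, neg_sub] using L.neg_mem h

theorem trans (huv : SameFiber L u v) (hvw : SameFiber L v w) : SameFiber L u w := by
  simpa only [SameFiber, Pi.add_def, sub_add_sub_cancel] using L.add_mem huv hvw

theorem tsub {m : ι → ℕ} (h : SameFiber L u v) (hu : m ≤ u) (hv : m ≤ v) :
    SameFiber L (u - m) (v - m) := by
  simpa only [SameFiber, Pi.sub_apply, Nat.cast_sub (hu _), Nat.cast_sub (hv _),
    sub_sub_sub_cancel_right] using h

variable [Fintype ι]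

theorem sum_eq (hL : ∀ x ∈ L, ∑ i, x i = 0) (h : SameFiber L u v) : ∑ i, u i = ∑ i, v i := by
  have hsum := hL _ h
  rw [Finset.sum_sub_distrib, sub_eq_zero] at hsum
  exact_mod_cast hsum

theorem eq_zero (hL : ∀ x ∈ L, ∑ i, x i = 0) (h : SameFiber L u v) (hu : u = 0) : v = 0 := by
  have hv : ∑ i, v i = 0 := by simp [← h.sum_eq hL, hu]
  funext i
  exact Finset.sum_eq_zero_iff.1 hv i (Finset.mem_univ i)

end SameFiber

theorem exists_pos_sameFiber {L : Submodule ℤ (ι → ℤ)} {u v : ι → ℕ} {y : ι → ℤ} (hy : y ∈ L)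
    (hlt : ∀ i, y i < max ((u i : ℤ) - v i) 0) : ∃ w, (∀ i, 0 < w i) ∧ SameFiber L u w := by
  have hpos : ∀ i, 0 < (u i : ℤ) - y i := fun i => by have := hlt i; omega
  refine ⟨fun i => ((u i : ℤ) - y i).toNat, fun i => Int.pos_iff_toNat_pos.1 (hpos i), ?_⟩
  simpa only [SameFiber, Int.toNat_of_nonneg (hpos _).le, sub_sub_cancel] using hy

variable [Fintype ι]

/-- The binomial `x^u - x^v`. -/
noncomputable def pureBinomial (R : Type*) [CommRing R] (u v : ι → ℕ) : MvPolynomial ι R :=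
  ∏ i, X i ^ u i - ∏ i, X i ^ v i

section PureBinomial

variable {R : Type*} [CommRing R]

theorem pureBinomial_self (u : ι → ℕ) : pureBinomial R u u = 0 := sub_self _

theorem pureBinomial_add_pureBinomial (u v w : ι → ℕ) :
    pureBinomial R u v + pureBinomial R v w = pureBinomial R u w :=
  sub_add_sub_cancel _ _ _

theorem pureBinomial_eq_mul {m u v : ι → ℕ} (hu : m ≤ u) (hv : m ≤ v) :
    pureBinomial R u v = (∏ i, X i ^ m i) * pureBinomial R (u - m) (v - m) := by
  simp only [pureBinomial, mul_sub, ← Finset.prod_mul_distrib, ← pow_add, Pi.sub_apply,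
    Nat.add_sub_of_le (hu _), Nat.add_sub_of_le (hv _)]

theorem pureBinomial_eq_of_inf_eq_zero {u v : ι → ℕ} (h : u ⊓ v = 0) :
    pureBinomial R u v =
      pureBinomial R (fun i => ((u i : ℤ) - v i).toNat) fun i => (-((u i : ℤ) - v i)).toNat := by
  have hmin : ∀ i, min (u i) (v i) = 0 := congrFun h
  congr 1 <;> funext i <;> have := hmin i <;> omega

/-- Induction on the degree: two binomials `x^u - x^w` and `x^w - x^v` sum to `x^u - x^v`, and if
all entries of `w` are positive then both are multiples of binomials of smaller degree. -/
theorem pureBinomial_mem_of_sameFiber {L : Submodule ℤ (ι → ℤ)} (hL : ∀ x ∈ L, ∑ i, x i = 0)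
    {J : Ideal (MvPolynomial ι R)}
    (hJ : ∀ x ∈ L, pureBinomial R (fun i => (x i).toNat) (fun i => (-x i).toNat) ∈ J ∨
      ∃ y ∈ L, ∀ i, y i < max (x i) 0)
    {u v : ι → ℕ} (huv : SameFiber L u v) : pureBinomial R u v ∈ J := by
  induction hd : ∑ i, u i using Nat.strong_induction_on generalizing u v with
  | _ d ih =>
  have mem_of_common : ∀ {u v : ι → ℕ}, SameFiber L u v → ∑ i, u i = d →
      (∃ k, 0 < u k ∧ 0 < v k) → pureBinomial R u v ∈ J := by
    rintro u v huv hu ⟨k, huk, hvk⟩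
    rw [pureBinomial_eq_mul (inf_le_left : u ⊓ v ≤ u) inf_le_right]
    refine J.mul_mem_left _ (ih _ ?_ (huv.tsub inf_le_left inf_le_right) rfl)
    rw [← hu]
    exact Finset.sum_lt_sum (fun i _ => Nat.sub_le _ _)
      ⟨k, Finset.mem_univ k, Nat.sub_lt huk (lt_min huk hvk)⟩
  by_cases hinf : u ⊓ v = 0
  · obtain hmem | ⟨y, hy, hlt⟩ := hJ _ huv
    · rwa [pureBinomial_eq_of_inf_eq_zero hinf]
    by_cases hu : u = 0
    · rw [hu, huv.eq_zero hL hu, pureBinomial_self]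
      exact J.zero_mem
    obtain ⟨w, hw, huw⟩ := exists_pos_sameFiber hy hlt
    obtain ⟨k, hk⟩ := Function.ne_iff.1 hu
    obtain ⟨l, hl⟩ := Function.ne_iff.1 fun hv : v = 0 => hu (huv.symm.eq_zero hL hv)
    rw [← pureBinomial_add_pureBinomial u w v]
    exact J.add_mem (mem_of_common huw hd ⟨k, Nat.pos_of_ne_zero hk, hw k⟩)
      (mem_of_common (huw.symm.trans huv) (huw.sum_eq hL ▸ hd) ⟨l, hw l, Nat.pos_of_ne_zero hl⟩)
  · obtain ⟨k, hk⟩ := Function.ne_iff.1 hinf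
    exact mem_of_common huv hd ⟨k, lt_min_iff.1 (Nat.pos_of_ne_zero hk)⟩

end PureBinomial

end Fiber

theorem isGenericLatticeIdeal_of_exists_lt (K : Type*) [Field K] {n : ℕ}
    {L : Submodule ℤ (Fin (n + 1) → ℤ)} (hL : ∀ x ∈ L, ∑ i, x i = 0)
    {S : Finset (Fin (n + 1) → ℤ)} (hSL : (S : Set (Fin (n + 1) → ℤ)) ⊆ L)
    (hS : ∀ x ∈ S, ∀ i, x i ≠ 0)
    (hlt : ∀ x ∈ L, x ≠ 0 → x ∉ S → ∃ y ∈ L, ∀ i, y i < max (x i) 0) :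
    IsGenericLatticeIdeal K n L := by
  refine ⟨S, hSL, hS, le_antisymm (Ideal.span_le.2 ?_) (Ideal.span_le.2 ?_)⟩
  · rintro _ ⟨u, v, huv, rfl⟩
    refine pureBinomial_mem_of_sameFiber hL (fun x hx => ?_) huv
    by_cases hx0 : x = 0
    · left
      simp [hx0, pureBinomial_self]
    by_cases hxS : x ∈ S
    · exact .inl (Ideal.subset_span ⟨x, hxS, rfl⟩)
    · exact .inr (hlt x hx hx0 hxS)
  · rintro _ ⟨x, hx, rfl⟩
    refine Ideal.subset_span ⟨fun i => (x i).toNat, fun i => (-x i).toNat, ?_, rfl⟩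
    simpa only [Int.toNat_sub_toNat_neg] using hSL hx

section Balanced

variable {ι R : Type*} [Fintype ι] [CommRing R]

/-- The matrices with left kernel vector `σ` and zero row sums: the linear conditions on the
members of the cone `C_σ`. -/
def balancedMatrices (σ : ι → R) : Submodule R (Matrix ι ι R) where
  carrier := {Y | σ ᵥ* Y = 0 ∧ Y *ᵥ 1 = 0}
  add_mem' hX hY :=
    ⟨by rw [vecMul_add, hX.1, hY.1, add_zero], by rw [add_mulVec, hX.2, hY.2, add_zero]⟩
  zero_mem' := ⟨vecMul_zero σ, zero_mulVec 1⟩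
  smul_mem' c Y hY :=
    ⟨by rw [vecMul_smul, hY.1, smul_zero], by rw [smul_mulVec, hY.2, smul_zero]⟩

theorem sum_eq_zero_of_mem_span_range {σ : ι → R} {M : Matrix ι ι R}
    (hM : M ∈ balancedMatrices σ) {x : ι → R} (hx : x ∈ Submodule.span R (Set.range M)) :
    ∑ i, x i = 0 := by
  obtain ⟨a, rfl⟩ : x ∈ LinearMap.range M.vecMulLinear := by rwa [range_vecMulLinear]
  rw [vecMulLinear_apply, ← dotProduct_one, ← dotProduct_mulVec, hM.2, dotProduct_zero]

theorem vecMul_apply_mul_eq_sum {σ : ι → R} {M : Matrix ι ι R} (hM : σ ᵥ* M = 0)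
    (a : ι → R) (j : ι) :
    (a ᵥ* M) j * σ j = ∑ i, -M i j * (a j * σ i - a i * σ j) := by
  have hcol : ∑ i, σ i * M i j = 0 := congrFun hM j
  calc (a ᵥ* M) j * σ j
      = ∑ i, a i * M i j * σ j - a j * ∑ i, σ i * M i j := by
        rw [hcol, mul_zero, sub_zero, ← Finset.sum_mul]; rfl
    _ = ∑ i, -M i j * (a j * σ i - a i * σ j) := by
        rw [Finset.mul_sum, ← Finset.sum_sub_distrib]
        exact Finset.sum_congr rfl fun i _ => by ring

theorem neg_mul_sub_le_vecMul_apply_mul [LinearOrder R] [IsStrictOrderedRing R] {σ : ι → R}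
    {M : Matrix ι ι R} (hM : σ ᵥ* M = 0) {a : ι → R} {j : ι} (hoff : ∀ i, i ≠ j → M i j ≤ 0)
    (hmax : ∀ i, a i * σ j ≤ a j * σ i) (k : ι) :
    -M k j * (a j * σ k - a k * σ j) ≤ (a ᵥ* M) j * σ j := by
  rw [vecMul_apply_mul_eq_sum hM]
  refine Finset.single_le_sum (f := fun i => -M i j * (a j * σ i - a i * σ j))
    (fun i _ => ?_) (Finset.mem_univ k)
  obtain rfl | hij := eq_or_ne i j
  · simp
  · exact mul_nonneg (neg_nonneg.2 (hoff i hij)) (sub_nonneg.2 (hmax i))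

end Balanced

section Script

variable {ι : Type*} [Finite ι] [Nonempty ι] {σ : ι → ℤ}

theorem exists_forall_mul_le_mul (hσ : ∀ i, 0 < σ i) (a : ι → ℤ) :
    ∃ j, ∀ i, a i * σ j ≤ a j * σ i := by
  obtain ⟨j, hj⟩ := Finite.exists_max fun i => (a i : ℚ) / σ i
  refine ⟨j, fun i => ?_⟩
  have := (div_le_div_iff₀ (Int.cast_pos.2 (hσ i)) (Int.cast_pos.2 (hσ j))).1 (hj i)
  exact_mod_cast this

theorem exists_nonneg_sub_smul_lt (hσ : ∀ i, 0 < σ i) (a : ι → ℤ) :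
    ∃ c : ℤ, 0 ≤ a - c • σ ∧ ∃ k, (a - c • σ) k < σ k := by
  obtain ⟨k, hk⟩ := Finite.exists_min fun i => a i / σ i
  refine ⟨a k / σ k, fun i => ?_, k, ?_⟩
  · exact sub_nonneg.2 ((Int.le_ediv_iff_mul_le (hσ i)).1 (hk i))
  · have := Int.lt_ediv_add_one_mul_self (a k) (hσ k)
    simp only [Pi.sub_apply, Pi.smul_apply, smul_eq_mul]
    linarith

end Script

section Firing

variable {ι : Type*} [Fintype ι] [Nonempty ι] {σ : ι → ℤ} {M : Matrix ι ι ℤ} {C : ℕ}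

theorem le_smul_of_vecMul_apply_le (hσ : ∀ i, 0 < σ i) (hM : σ ᵥ* M = 0)
    (hneg : ∀ i j, i ≠ j → M i j < 0) (hC : ∀ i j, i ≠ j → M j j ≤ C * -M i j)
    {a : ι → ℤ} (ha : ∃ k, a k < σ k) (hle : ∀ j, (a ᵥ* M) j ≤ M j j) :
    a ≤ (C + 1 : ℤ) • σ := by
  obtain ⟨k, hk⟩ := ha
  obtain ⟨j, hmax⟩ := exists_forall_mul_le_mul hσ a
  have hspread : a j * σ k - a k * σ j ≤ C * σ j := by
    obtain rfl | hkj := eq_or_ne k j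
    · rw [sub_self]
      exact mul_nonneg C.cast_nonneg (hσ k).le
    refine le_of_mul_le_mul_left ?_ (neg_pos.2 (hneg k j hkj))
    calc -M k j * (a j * σ k - a k * σ j)
        ≤ (a ᵥ* M) j * σ j :=
          neg_mul_sub_le_vecMul_apply_mul hM (fun i hij => (hneg i j hij).le) hmax k
      _ ≤ C * -M k j * σ j := mul_le_mul_of_nonneg_right ((hle j).trans (hC k j hkj)) (hσ j).le
      _ = -M k j * (C * σ j) := by ring
  have haj : a j < (C + 1) * σ j := by
    refine lt_of_mul_lt_mul_right ?_ (hσ k).le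
    calc a j * σ k ≤ C * σ j * 1 + a k * σ j := by linarith
      _ < C * σ j * σ k + σ k * σ j :=
          add_lt_add_of_le_of_lt
            (mul_le_mul_of_nonneg_left (hσ k) (mul_nonneg C.cast_nonneg (hσ j).le))
            (mul_lt_mul_of_pos_right hk (hσ j))
      _ = (C + 1) * σ j * σ k := by ring
  intro i
  refine le_of_mul_le_mul_right ?_ (hσ j)
  calc a i * σ j ≤ a j * σ i := hmax i
    _ ≤ (C + 1) * σ j * σ i := mul_le_mul_of_nonneg_right haj.le (hσ i).le
    _ = (C + 1) * σ i * σ j := by ring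

theorem exists_mem_Icc_vecMul_eq_or_exists_lt (hσ : ∀ i, 0 < σ i) (hM : σ ᵥ* M = 0)
    (hneg : ∀ i j, i ≠ j → M i j < 0) (hC : ∀ i j, i ≠ j → M j j ≤ C * -M i j)
    {x : ι → ℤ} (hx : x ∈ Submodule.span ℤ (Set.range M)) :
    (∃ a ∈ Set.Icc 0 ((C + 1 : ℤ) • σ), a ᵥ* M = x) ∨ ∃ j, M j j < x j := by
  obtain ⟨b, rfl⟩ : x ∈ LinearMap.range M.vecMulLinear := by rwa [range_vecMulLinear]
  obtain ⟨c, hnonneg, hlt⟩ := exists_nonneg_sub_smul_lt hσ b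
  have hb : (b - c • σ) ᵥ* M = b ᵥ* M := by
    rw [sub_vecMul, smul_vecMul, hM, smul_zero, sub_zero]
  refine or_iff_not_imp_right.2 fun hle => ⟨b - c • σ, ⟨hnonneg, ?_⟩, hb⟩
  refine le_smul_of_vecMul_apply_le hσ hM hneg hC hlt fun j => ?_
  rw [hb]
  exact not_lt.1 fun hj => hle ⟨j, hj⟩

end Firing

theorem isGenericLatticeIdeal_span_range (K : Type*) [Field K] {n : ℕ} {σ : Fin (n + 1) → ℤ}
    (hσ : ∀ i, 0 < σ i) {M : Matrix (Fin (n + 1)) (Fin (n + 1)) ℤ} (hM : M ∈ balancedMatrices σ)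
    (hneg : ∀ i j, i ≠ j → M i j < 0) {C : ℕ} (hC : ∀ i j, i ≠ j → M j j ≤ C * -M i j)
    (hfull : ∀ a ∈ Set.Icc 0 ((C + 1 : ℤ) • σ), a ᵥ* M ≠ 0 → ∀ j, (a ᵥ* M) j ≠ 0) :
    IsGenericLatticeIdeal K n (Submodule.span ℤ (Set.range M) : Set (Fin (n + 1) → ℤ)) := by
  have hrows := range_vecMulLinear M
  refine isGenericLatticeIdeal_of_exists_lt K (fun x => sum_eq_zero_of_mem_span_range hM)
    (S := ((Finset.Icc 0 ((C + 1 : ℤ) • σ)).image (· ᵥ* M)).erase 0) ?_ ?_ ?_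
  · intro x hx
    obtain ⟨a, -, rfl⟩ := Finset.mem_image.1 (Finset.mem_of_mem_erase hx)
    exact hrows.le ⟨a, rfl⟩
  · intro x hx
    obtain ⟨hx0, a, ha, rfl⟩ := by simpa using hx
    exact hfull a ha hx0
  · intro x hx hx0 hxS
    obtain ⟨a, ha, rfl⟩ | ⟨j, hj⟩ :=
      exists_mem_Icc_vecMul_eq_or_exists_lt hσ hM.1 hneg hC hx
    · exact absurd (Finset.mem_erase.2
        ⟨hx0, Finset.mem_image.2 ⟨a, Finset.mem_Icc.2 ha, rfl⟩⟩) hxS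
    refine ⟨M j, Submodule.subset_span ⟨j, rfl⟩, fun i => ?_⟩
    obtain rfl | hij := eq_or_ne i j
    · exact lt_max_of_lt_left hj
    · exact lt_max_of_lt_right (hneg j i hij.symm)

section CompleteLaplacian

variable {ι F : Type*} [Fintype ι] [DecidableEq ι] [Field F]

/-- The matrix `1 - 1σᵀ / ∑ σ`, which is the Laplacian of the complete digraph whose edges into `j`
all have weight `σ j / ∑ σ`. It is also the projection onto the orthogonal complement of `σ` along
`1`, so that `Y ↦ P * Y * P` projects onto `balancedMatrices σ`. -/
def completeLaplacian (σ : ι → F) : Matrix ι ι F := 1 - (∑ i, σ i)⁻¹ • vecMulVec 1 σ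

variable {σ : ι → F}

theorem completeLaplacian_apply_of_ne {i j : ι} (hij : i ≠ j) :
    completeLaplacian σ i j = -((∑ k, σ k)⁻¹ * σ j) := by
  simp [completeLaplacian, hij]

theorem completeLaplacian_mem_balancedMatrices (hσ : ∑ i, σ i ≠ 0) :
    completeLaplacian σ ∈ balancedMatrices σ := by
  constructor
  · rw [completeLaplacian, vecMul_sub, vecMul_one, vecMul_smul, vecMul_vecMulVec, dotProduct_one,
      smul_smul, inv_mul_cancel₀ hσ, one_smul, sub_self]
  · rw [completeLaplacian, sub_mulVec, one_mulVec, smul_mulVec, vecMulVec_mulVec, dotProduct_one,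
      op_smul_eq_smul, smul_smul, inv_mul_cancel₀ hσ, one_smul, sub_self]

theorem completeLaplacian_mul_mul_mem (hσ : ∑ i, σ i ≠ 0) (Y : Matrix ι ι F) :
    completeLaplacian σ * Y * completeLaplacian σ ∈ balancedMatrices σ := by
  obtain ⟨hker, hrow⟩ := completeLaplacian_mem_balancedMatrices hσ
  constructor
  · rw [← vecMul_vecMul, ← vecMul_vecMul, hker, zero_vecMul, zero_vecMul]
  · rw [← mulVec_mulVec, hrow, mulVec_zero]

theorem completeLaplacian_mul_mul_eq_self {Y : Matrix ι ι F} (hY : Y ∈ balancedMatrices σ) :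
    completeLaplacian σ * Y * completeLaplacian σ = Y := by
  have hleft : completeLaplacian σ * Y = Y := by
    rw [completeLaplacian, sub_mul, one_mul, smul_mul, vecMulVec_mul, hY.1, vecMulVec_zero,
      smul_zero, sub_zero]
  rw [hleft, completeLaplacian, mul_sub, mul_one, Matrix.mul_smul, mul_vecMulVec, hY.2,
    zero_vecMulVec, smul_zero, sub_zero]

theorem completeLaplacian_map {F' : Type*} [Field F'] (f : F →+* F') (σ : ι → F) :
    (completeLaplacian σ).map f = completeLaplacian fun i => f (σ i) := by
  ext i j
  simp [completeLaplacian, one_apply, apply_ite f]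

theorem exists_vecMul_completeLaplacian_mul_mul_apply_ne_zero (hσ : ∀ i, σ i ≠ 0)
    (hsum : ∑ i, σ i ≠ 0) {a : ι → F} (ha : a ᵥ* completeLaplacian σ ≠ 0) (j : ι) :
    ∃ Y, (a ᵥ* (completeLaplacian σ * Y * completeLaplacian σ)) j ≠ 0 := by
  obtain ⟨i, hi⟩ := Function.ne_iff.1 ha
  obtain ⟨k, hkj⟩ : ∃ k, k ≠ j := by
    by_contra! hj
    have hzero : (a ᵥ* completeLaplacian σ) ⬝ᵥ 1 = 0 := by
      rw [← dotProduct_mulVec, (completeLaplacian_mem_balancedMatrices hsum).2, dotProduct_zero]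
    have : Subsingleton ι := ⟨fun k l => (hj k).trans (hj l).symm⟩
    rw [dotProduct_one, Fintype.sum_subsingleton _ i] at hzero
    exact hi hzero
  refine ⟨vecMulVec (Pi.single i 1) (Pi.single k 1), ?_⟩
  rw [← vecMul_vecMul, ← vecMul_vecMul, vecMul_vecMulVec, dotProduct_single_one, smul_vecMul,
    single_one_vecMul, Pi.smul_apply, smul_eq_mul, row_apply, completeLaplacian_apply_of_ne hkj]
  exact mul_ne_zero hi (neg_ne_zero.2 (mul_ne_zero (inv_ne_zero hsum) (hσ j)))

end CompleteLaplacian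

section GeneralPosition

open Filter Topology

theorem isOpen_and_dense_setOf_forall_ne_zero {E : Type*} [AddCommGroup E] [Module ℝ E]
    [TopologicalSpace E] [ContinuousAdd E] [ContinuousSMul ℝ E] {S : Set (E →L[ℝ] ℝ)}
    (hS : S.Finite) :
    IsOpen {x | ∀ f ∈ S, f ≠ 0 → f x ≠ 0} ∧ Dense {x | ∀ f ∈ S, f ≠ 0 → f x ≠ 0} := by
  induction S, hS using Set.Finite.induction_on with
  | empty => simp
  | @insert f S _ _ ih =>
    have hinter : {x | ∀ g ∈ insert f S, g ≠ 0 → g x ≠ 0} =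
        {x | f ≠ 0 → f x ≠ 0} ∩ {x | ∀ g ∈ S, g ≠ 0 → g x ≠ 0} := by
      ext x
      simp
    obtain rfl | hf := eq_or_ne f 0
    · simpa [hinter] using ih
    have hopen : IsOpen {x | f ≠ 0 → f x ≠ 0} := by
      simpa [hf] using isOpen_ne_fun f.continuous continuous_const
    have hdense : Dense {x | f ≠ 0 → f x ≠ 0} := by
      have hker : (LinearMap.ker (f : E →ₗ[ℝ] ℝ) : Set E)ᶜ = {x | f ≠ 0 → f x ≠ 0} := by
        ext x
        simp [hf]
      rw [← hker, ← interior_eq_empty_iff_dense_compl]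
      by_contra hne
      have htop := Submodule.eq_top_of_nonempty_interior' _ (Set.nonempty_iff_ne_empty.2 hne)
      exact hf (ContinuousLinearMap.coe_injective (LinearMap.ker_eq_top.1 htop))
    rw [hinter]
    exact ⟨hopen.inter ih.1, hdense.inter_of_isOpen_left ih.2 hopen⟩

variable {ι : Type*}

theorem denseRange_map_ratCast :
    DenseRange fun q : Matrix ι ι ℚ => q.map ((↑) : ℚ → ℝ) :=
  DenseRange.piMap fun _ => DenseRange.piMap fun _ => Rat.denseRange_cast

variable [Fintype ι]

theorem frequently_rational_balanced_forall_vecMul_ne_zero {σ : ι → ℚ} (hσ : ∀ i, σ i ≠ 0)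
    (hsum : ∑ i, σ i ≠ 0) {T : Set (ι → ℝ)} (hT : T.Finite) {Q : Matrix ι ι ℝ}
    (hQ : Q ∈ balancedMatrices fun i => (σ i : ℝ)) :
    ∃ᶠ Y in 𝓝 Q, Y ∈ balancedMatrices (fun i => (σ i : ℝ)) ∧
      (∃ q : Matrix ι ι ℚ, q.map (↑) = Y) ∧
      ∀ a ∈ T, a ᵥ* Y ≠ 0 → ∀ j, (a ᵥ* Y) j ≠ 0 := by
  classical
  have hσR : ∀ i, (σ i : ℝ) ≠ 0 := fun i => Rat.cast_ne_zero.2 (hσ i)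
  have hsumR : ∑ i, (σ i : ℝ) ≠ 0 := by exact_mod_cast hsum
  let P := completeLaplacian fun i => (σ i : ℝ)
  let f (a : ι → ℝ) (j : ι) : Matrix ι ι ℝ →L[ℝ] ℝ := LinearMap.toContinuousLinearMap
    { toFun := fun Y => (a ᵥ* (P * Y * P)) j
      map_add' := fun X Y => by simp [mul_add, add_mul, vecMul_add]
      map_smul' := fun c Y => by simp [vecMul_smul] }
  obtain ⟨hopen, hdense⟩ :=
    isOpen_and_dense_setOf_forall_ne_zero (hT.image2 f Set.finite_univ)
  have hfreq := mem_closure_iff_frequently.1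
    ((denseRange_map_ratCast (ι := ι)).inter_of_isOpen_right hdense hopen Q)
  have htendsto : Tendsto (fun Y => P * Y * P) (𝓝 Q) (𝓝 Q) := by
    have hcont : Continuous fun Y : Matrix ι ι ℝ => P * Y * P := by fun_prop
    simpa only [P, completeLaplacian_mul_mul_eq_self hQ] using hcont.tendsto Q
  refine htendsto.frequently (hfreq.mono ?_)
  rintro _ ⟨⟨q, rfl⟩, hq⟩
  refine ⟨completeLaplacian_mul_mul_mem hsumR _,
    ⟨completeLaplacian σ * q * completeLaplacian σ, ?_⟩, fun a ha hne j => ?_⟩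
  · have hP : (completeLaplacian σ).map ((↑) : ℚ → ℝ) = P :=
      completeLaplacian_map (Rat.castHom ℝ) σ
    rw [map_mul_ratCast, map_mul_ratCast, hP]
  · have haP : a ᵥ* P ≠ 0 := fun h => hne (by
      rw [← vecMul_vecMul, ← vecMul_vecMul, h, zero_vecMul, zero_vecMul])
    obtain ⟨Y, hY⟩ := exists_vecMul_completeLaplacian_mul_mul_apply_ne_zero hσR hsumR haP j
    exact hq (f a j) ⟨a, ha, j, Set.mem_univ j, rfl⟩ (DFunLike.ne_iff.2 ⟨Y, hY⟩)

end GeneralPosition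

section Density

open Filter Topology

theorem exists_natCast_forall_lt_mul_neg {ι : Type*} [Finite ι] {Q : Matrix ι ι ℝ}
    (hneg : ∀ i j, i ≠ j → Q i j < 0) : ∃ C : ℕ, ∀ i j, i ≠ j → Q j j < C * -Q i j := by
  have hev : ∀ᶠ C : ℕ in atTop, ∀ i j, i ≠ j → Q j j < C * -Q i j := by
    simp only [eventually_all]
    exact fun i j hij => (tendsto_natCast_atTop_atTop.atTop_mul_const
      (neg_pos.2 (hneg i j hij))).eventually_gt_atTop _
  exact hev.exists

theorem eventually_forall_neg_and_lt_mul_neg {ι : Type*} [Finite ι] {Q : Matrix ι ι ℝ} {C : ℝ}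
    (hneg : ∀ i j, i ≠ j → Q i j < 0) (hC : ∀ i j, i ≠ j → Q j j < C * -Q i j) :
    ∀ᶠ Y in 𝓝 Q, ∀ i j, i ≠ j → Y i j < 0 ∧ Y j j < C * -Y i j := by
  have hentry : ∀ i j, Tendsto (fun Y : Matrix ι ι ℝ => Y i j) (𝓝 Q) (𝓝 (Q i j)) :=
    fun i j => (continuous_id.matrix_elem i j).tendsto Q
  simp only [eventually_all]
  exact fun i j hij => ((hentry i j).eventually_lt_const (hneg i j hij)).and
    ((hentry j j).eventually_lt ((hentry i j).neg.const_mul C) (hC i j hij))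

theorem natCast_mul_vecMul_apply {ι : Type*} [Fintype ι] {Y : Matrix ι ι ℝ} {M : Matrix ι ι ℤ}
    {lam : ℕ} (hM : ∀ i j, (lam : ℝ) * Y i j = M i j) (a : ι → ℤ) (j : ι) :
    (lam : ℝ) * ((fun i => (a i : ℝ)) ᵥ* Y) j = ((a ᵥ* M) j : ℤ) := by
  simp only [vecMul, dotProduct, Int.cast_sum, Int.cast_mul, ← hM, Finset.mul_sum]
  exact Finset.sum_congr rfl fun i _ => mul_left_comm _ _ _

variable (K : Type*) [Field K] {n : ℕ} {sig : Fin (n + 1) → ℤ}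

/-- The rational members of `coneCSig n sig` with an integer multiple whose rows span a lattice with
generic lattice ideal over `K`. -/
def genericRationalLaplacians (n : ℕ) (sig : Fin (n + 1) → ℤ) :
    Set (Matrix (Fin (n + 1)) (Fin (n + 1)) ℝ) :=
  {Q | Q ∈ coneCSig n sig ∧ (∀ i j, ∃ q : ℚ, Q i j = (q : ℝ)) ∧
    ∃ lam : ℕ, lam ≠ 0 ∧ ∃ M : Matrix (Fin (n + 1)) (Fin (n + 1)) ℤ,
      (∀ i j, (lam : ℝ) * Q i j = (M i j : ℝ)) ∧
      IsGenericLatticeIdeal K n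
        (Submodule.span ℤ (Set.range (fun i => M i)) : Set (Fin (n + 1) → ℤ))}

theorem isGenericLatticeIdeal_of_natCast_mul_eq (hsig : ∀ i, 0 < sig i)
    {Y : Matrix (Fin (n + 1)) (Fin (n + 1)) ℝ} {M : Matrix (Fin (n + 1)) (Fin (n + 1)) ℤ}
    {lam : ℕ} (hlam : lam ≠ 0) (hM : ∀ i j, (lam : ℝ) * Y i j = M i j)
    (hY : Y ∈ balancedMatrices fun i => (sig i : ℝ)) {C : ℕ}
    (hneg : ∀ i j, i ≠ j → Y i j < 0 ∧ Y j j < C * -Y i j)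
    (hfull : ∀ a ∈ Set.Icc 0 ((C + 1 : ℤ) • sig), (fun i => (a i : ℝ)) ᵥ* Y ≠ 0 →
      ∀ j, ((fun i => (a i : ℝ)) ᵥ* Y) j ≠ 0) :
    IsGenericLatticeIdeal K n (Submodule.span ℤ (Set.range M) : Set (Fin (n + 1) → ℤ)) := by
  have hlamR : (0 : ℝ) < lam := Nat.cast_pos.2 (Nat.pos_of_ne_zero hlam)
  refine isGenericLatticeIdeal_span_range K hsig ⟨?_, ?_⟩ (fun i j hij => ?_) (C := C)
    (fun i j hij => ?_) fun a ha hne j => ?_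
  · funext j
    have := natCast_mul_vecMul_apply hM sig j
    rw [hY.1, Pi.zero_apply, mul_zero] at this
    exact_mod_cast this.symm
  · funext i
    have hrow : ∑ j, Y i j = 0 := by simpa [mulVec, dotProduct] using congrFun hY.2 i
    have : ∑ j, (M i j : ℝ) = 0 := by
      simp only [← hM, ← Finset.mul_sum, hrow, mul_zero]
    simpa [mulVec, dotProduct] using (by exact_mod_cast this : ∑ j, M i j = 0)
  · have := mul_neg_of_pos_of_neg hlamR (hneg i j hij).1
    rw [hM] at this
    exact_mod_cast this
  · have := mul_le_mul_of_nonneg_left (hneg i j hij).2.le hlamR.le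
    rw [mul_left_comm, mul_neg, hM, hM] at this
    exact_mod_cast this
  · have hYne : (fun i => (a i : ℝ)) ᵥ* Y ≠ 0 := fun h => hne <| funext fun i => by
      have := natCast_mul_vecMul_apply hM a i
      rw [h, Pi.zero_apply, mul_zero] at this
      exact_mod_cast this.symm
    have := mul_ne_zero hlamR.ne' (hfull a ha hYne j)
    rw [natCast_mul_vecMul_apply hM] at this
    exact_mod_cast this

theorem mem_coneCSig_of_neg {Y : Matrix (Fin (n + 1)) (Fin (n + 1)) ℝ}
    (hY : Y ∈ balancedMatrices fun i => (sig i : ℝ)) (hneg : ∀ i j, i ≠ j → Y i j < 0) :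
    Y ∈ coneCSig n sig :=
  ⟨fun i => by simpa [mulVec, dotProduct] using congrFun hY.2 i, fun i j hij => (hneg i j hij).le,
    hY.1, fun i j hij => .single ⟨hij, hneg i j hij⟩⟩

theorem mem_closure_genericRationalLaplacians_of_neg (hsig : ∀ i, 0 < sig i)
    {Q : Matrix (Fin (n + 1)) (Fin (n + 1)) ℝ} (hQ : Q ∈ balancedMatrices fun i => (sig i : ℝ))
    (hneg : ∀ i j, i ≠ j → Q i j < 0) : Q ∈ closure (genericRationalLaplacians K n sig) := by
  obtain ⟨C, hC⟩ := exists_natCast_forall_lt_mul_neg hneg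
  have hfreq := frequently_rational_balanced_forall_vecMul_ne_zero (σ := fun i => (sig i : ℚ))
    (fun i => Int.cast_ne_zero.2 (hsig i).ne')
    (Finset.sum_pos (fun i _ => Int.cast_pos.2 (hsig i)) Finset.univ_nonempty).ne'
    ((Set.finite_Icc 0 ((C + 1 : ℤ) • sig)).image fun a i => (a i : ℝ))
    (by simpa only [Rat.cast_intCast] using hQ)
  refine mem_closure_iff_frequently.2
    ((hfreq.and_eventually (eventually_forall_neg_and_lt_mul_neg hneg hC)).mono ?_)
  rintro _ ⟨⟨hY, ⟨q, rfl⟩, hfull⟩, hY_neg⟩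
  simp only [Rat.cast_intCast] at hY
  have hnum : ∀ i j, (q.den : ℝ) * (q.map (↑) : Matrix _ _ ℝ) i j = q.num i j := fun i j => by
    rw [map_apply, ← q.num_div_den i j]
    push_cast
    exact mul_div_cancel₀ _ (Nat.cast_ne_zero.2 q.den_ne_zero)
  exact ⟨mem_coneCSig_of_neg hY fun i j hij => (hY_neg i j hij).1, fun i j => ⟨q i j, rfl⟩,
    q.den, q.den_ne_zero, q.num, hnum, isGenericLatticeIdeal_of_natCast_mul_eq K hsig q.den_ne_zero
      hnum hY hY_neg fun a ha => hfull _ ⟨a, ha, rfl⟩⟩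

theorem stmt12_general (hsig : ∀ i, 0 < sig i) {Q : Matrix (Fin (n + 1)) (Fin (n + 1)) ℝ}
    (hrow : ∀ i, ∑ j, Q i j = 0) (hoff : ∀ i j, i ≠ j → Q i j ≤ 0)
    (hker : (fun i => (sig i : ℝ)) ᵥ* Q = 0) :
    Q ∈ closure (genericRationalLaplacians K n sig) := by
  have hQ : Q ∈ balancedMatrices fun i => (sig i : ℝ) :=
    ⟨hker, funext fun i => by simpa [mulVec, dotProduct] using hrow i⟩
  have hsum : 0 < ∑ i, (sig i : ℝ) :=
    Finset.sum_pos (fun i _ => Int.cast_pos.2 (hsig i)) Finset.univ_nonempty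
  let P := completeLaplacian fun i => (sig i : ℝ)
  have hP : P ∈ balancedMatrices fun i => (sig i : ℝ) :=
    completeLaplacian_mem_balancedMatrices hsum.ne'
  have hPneg : ∀ i j, i ≠ j → P i j < 0 := fun i j hij =>
    (completeLaplacian_apply_of_ne hij).trans_lt
      (neg_neg_of_pos (mul_pos (inv_pos.2 hsum) (Int.cast_pos.2 (hsig j))))
  have htendsto : Tendsto (fun t : ℝ => Q + t • P) (𝓝[>] 0) (𝓝 Q) := by
    have hcont : Continuous fun t : ℝ => Q + t • P := by fun_prop
    exact (hcont.tendsto' 0 Q (by simp)).mono_left nhdsWithin_le_nhds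
  refine closure_closure.le (mem_closure_of_tendsto htendsto ?_)
  filter_upwards [self_mem_nhdsWithin] with t ht
  exact mem_closure_genericRationalLaplacians_of_neg K hsig
    (add_mem hQ (Submodule.smul_mem _ t hP))
    fun i j hij => add_neg_of_nonpos_of_neg (hoff i j hij)
      (mul_neg_of_pos_of_neg ht (hPneg i j hij))

end Density

theorem stmt12 (K : Type*) [Field K] (n : ℕ) (hn : 1 ≤ n)
    (sig : Fin (n+1) → ℤ) (hpos : ∀ i, 0 < sig i)
    (hgcd : Finset.univ.gcd sig = 1) :
    ∀ Q ∈ coneCSig n sig,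
      Q ∈ closure {Q' : Matrix (Fin (n+1)) (Fin (n+1)) ℝ | Q' ∈ coneCSig n sig ∧
        (∀ i j, ∃ q : ℚ, Q' i j = (q : ℝ)) ∧
        ∃ lam : ℕ, lam ≠ 0 ∧ ∃ M : Matrix (Fin (n+1)) (Fin (n+1)) ℤ,
          (∀ i j, (lam : ℝ) * Q' i j = (M i j : ℝ)) ∧
          IsGenericLatticeIdeal K n
            (Submodule.span ℤ (Set.range (fun i => M i)) : Set (Fin (n+1) → ℤ))} :=
  fun _ ⟨hrow, hoff, hker, _⟩ => stmt12_general K hpos hrow hoff hker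
end

section
/- Let n ≥ 1 and let Q : Matrix (Fin (n+1)) (Fin (n+1)) ℝ satisfy: all row sums of Q are zero, Q i j ≤ 0 for all i ≠ j, and the support digraph of Q (edge from i to j iff i ≠ j and Q i j < 0) is strongly connected. Then there exists a vector Σ : Fin (n+1) → ℝ with every entry strictly positive such that {w : Fin (n+1) → ℝ | Matrix.vecMul w Q = 0} is exactly the set of real scalar multiples of Σ. -/
open Matrix

/-!
The absolute value of a left null vector is again a left null vector: by Kato's inequality
`|w| Q ≤ |w Q| = 0`, and the entries of `|w| Q` add up to `|w| Q 1 = 0`. A nonnegative left null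
vector that vanishes at a vertex vanishes at all its in-neighbours, hence everywhere by strong
connectivity. So a nonzero left null vector, which exists because `Q 1 = 0` makes `Q` singular, has
no zero entry and its absolute value is positive; and any other left null vector, minus the multiple
of that one which cancels one of its entries, is zero.
-/

/-- `Q` is the Laplacian of a weighted directed graph with positive weights: its rows sum to zero
and its off-diagonal entries are nonpositive. The row sums are encoded as the entries of
`Q *ᵥ 1`. -/
structure IsLaplacian {ι R : Type*} [Fintype ι] [NonAssocSemiring R] [LE R]
    (Q : Matrix ι ι R) : Prop where
  mulVec_one : Q *ᵥ 1 = 0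
  offDiag_nonpos : Pairwise fun i j => Q i j ≤ 0

/-- Adjacency in the support digraph of `Q`, in which `i ⟶ j` is an edge when the off-diagonal
entry `Q i j` is negative. This is the relation whose transitive closure expresses strong
connectivity. -/
def SupportAdj {ι R : Type*} [Zero R] [LT R] (Q : Matrix ι ι R) (i j : ι) : Prop :=
  i ≠ j ∧ Q i j < 0

section OrderedRing

variable {ι R : Type*} [Fintype ι] [Ring R] [LinearOrder R] {Q : Matrix ι ι R} {w : ι → R}

section IsOrderedRing

variable [IsOrderedRing R]

theorem abs_vecMul_le_vecMul_of_nonneg (hQ : Pairwise fun i j => Q i j ≤ 0) {j : ι}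
    (hj : 0 ≤ w j) : (|w| ᵥ* Q) j ≤ (w ᵥ* Q) j := by
  refine Finset.sum_le_sum fun i _ => ?_
  rcases eq_or_ne i j with rfl | hij
  · rw [Pi.abs_apply, abs_of_nonneg hj]
  · exact mul_le_mul_of_nonpos_right (le_abs_self (w i)) (hQ hij)

theorem abs_vecMul_le_abs_vecMul (hQ : Pairwise fun i j => Q i j ≤ 0) :
    |w| ᵥ* Q ≤ |w ᵥ* Q| := by
  intro j
  rcases le_total 0 (w j) with hj | hj
  · exact (abs_vecMul_le_vecMul_of_nonneg hQ hj).trans (le_abs_self _)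
  · calc (|w| ᵥ* Q) j = (|-w| ᵥ* Q) j := by rw [abs_neg]
      _ ≤ (-w ᵥ* Q) j := abs_vecMul_le_vecMul_of_nonneg hQ (neg_nonneg.2 hj)
      _ = -(w ᵥ* Q) j := by rw [neg_vecMul, Pi.neg_apply]
      _ ≤ |(w ᵥ* Q) j| := neg_le_abs _

theorem IsLaplacian.abs_vecMul_eq_zero (hQ : IsLaplacian Q) (hw : w ᵥ* Q = 0) :
    |w| ᵥ* Q = 0 := by
  have nonpos : |w| ᵥ* Q ≤ 0 := by
    simpa only [hw, abs_zero] using abs_vecMul_le_abs_vecMul (w := w) hQ.offDiag_nonpos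
  have sum_eq_zero : ∑ j, (|w| ᵥ* Q) j = 0 := by
    rw [← dotProduct_one, ← dotProduct_mulVec, hQ.mulVec_one, dotProduct_zero]
  exact (Fintype.sum_eq_zero_iff_of_nonpos nonpos).1 sum_eq_zero

end IsOrderedRing

variable [IsStrictOrderedRing R]

theorem eq_zero_of_vecMul_nonneg_of_neg (hQ : Pairwise fun i j => Q i j ≤ 0) (hw : 0 ≤ w)
    {i j : ι} (hwQ : 0 ≤ (w ᵥ* Q) j) (hj : w j = 0) (hij : Q i j < 0) : w i = 0 := by
  have terms_nonpos : ∀ k ∈ Finset.univ, w k * Q k j ≤ 0 := by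
    intro k _
    rcases eq_or_ne k j with rfl | hkj
    · rw [hj, zero_mul]
    · exact mul_nonpos_of_nonneg_of_nonpos (hw k) (hQ hkj)
  have sum_eq_zero : ∑ k, w k * Q k j = 0 := (Finset.sum_nonpos terms_nonpos).antisymm hwQ
  have term_eq_zero : w i * Q i j = 0 :=
    (Finset.sum_eq_zero_iff_of_nonpos terms_nonpos).1 sum_eq_zero i (Finset.mem_univ i)
  exact (mul_eq_zero.1 term_eq_zero).resolve_right hij.ne

theorem eq_zero_of_reflTransGen_supportAdj (hQ : Pairwise fun i j => Q i j ≤ 0) (hw : 0 ≤ w)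
    (hwQ : 0 ≤ w ᵥ* Q) {i j : ι} (hij : Relation.ReflTransGen (SupportAdj Q) i j)
    (hj : w j = 0) : w i = 0 := by
  induction hij using Relation.ReflTransGen.head_induction_on with
  | refl => exact hj
  | head hab _ hb => exact eq_zero_of_vecMul_nonneg_of_neg hQ hw (hwQ _) hb hab.2

theorem IsLaplacian.eq_zero_of_vecMul_eq_zero (hQ : IsLaplacian Q)
    (hconn : ∀ i j, Relation.ReflTransGen (SupportAdj Q) i j) (hw : w ᵥ* Q = 0) {j : ι}
    (hj : w j = 0) : w = 0 := by
  funext i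
  refine abs_eq_zero.1 (eq_zero_of_reflTransGen_supportAdj hQ.offDiag_nonpos (abs_nonneg w)
    (hQ.abs_vecMul_eq_zero hw).ge (hconn i j) ?_)
  rw [Pi.abs_apply, hj, abs_zero]

end OrderedRing

theorem exists_ne_zero_vecMul_eq_zero_of_mulVec_one {ι R : Type*} [Fintype ι] [Nonempty ι]
    [CommRing R] [IsDomain R] {Q : Matrix ι ι R} (hQ : Q *ᵥ 1 = 0) :
    ∃ w ≠ 0, w ᵥ* Q = 0 := by
  classical
  exact exists_vecMul_eq_zero_iff.2 (exists_mulVec_eq_zero_iff.1 ⟨1, one_ne_zero, hQ⟩)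

theorem IsLaplacian.exists_pos_vecMul_eq_zero {ι R : Type*} [Fintype ι] [Nonempty ι] [CommRing R]
    [LinearOrder R] [IsStrictOrderedRing R] {Q : Matrix ι ι R} (hQ : IsLaplacian Q)
    (hconn : ∀ i j, Relation.ReflTransGen (SupportAdj Q) i j) :
    ∃ σ : ι → R, (∀ i, 0 < σ i) ∧ σ ᵥ* Q = 0 := by
  obtain ⟨w, w_ne_zero, hw⟩ := exists_ne_zero_vecMul_eq_zero_of_mulVec_one hQ.mulVec_one
  exact ⟨|w|, fun i => abs_pos.2 fun hi => w_ne_zero (hQ.eq_zero_of_vecMul_eq_zero hconn hw hi),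
    hQ.abs_vecMul_eq_zero hw⟩

section Field

variable {ι K : Type*} [Fintype ι] [Field K] [LinearOrder K] [IsStrictOrderedRing K]
  {Q : Matrix ι ι K}

theorem IsLaplacian.exists_eq_smul_of_vecMul_eq_zero (hQ : IsLaplacian Q)
    (hconn : ∀ i j, Relation.ReflTransGen (SupportAdj Q) i j) {σ w : ι → K}
    (σ_ne_zero : σ ≠ 0) (hσ : σ ᵥ* Q = 0) (hw : w ᵥ* Q = 0) : ∃ c : K, w = c • σ := by
  obtain ⟨i, hi⟩ := Function.ne_iff.1 σ_ne_zero
  have sub_vecMul_eq_zero : (w - (w i / σ i) • σ) ᵥ* Q = 0 := by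
    rw [sub_vecMul, smul_vecMul, hw, hσ, smul_zero, sub_zero]
  have sub_apply_eq_zero : (w - (w i / σ i) • σ) i = 0 :=
    sub_eq_zero.2 (div_mul_cancel₀ (w i) hi).symm
  exact ⟨w i / σ i,
    sub_eq_zero.1 (hQ.eq_zero_of_vecMul_eq_zero hconn sub_vecMul_eq_zero sub_apply_eq_zero)⟩

theorem stmt16_general [Nonempty ι] (hQ : IsLaplacian Q)
    (hconn : ∀ i j, Relation.ReflTransGen (SupportAdj Q) i j) :
    ∃ σ : ι → K, (∀ i, 0 < σ i) ∧ {w : ι → K | w ᵥ* Q = 0} = {w | ∃ c : K, w = c • σ} := by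
  obtain ⟨σ, σ_pos, hσ⟩ := hQ.exists_pos_vecMul_eq_zero hconn
  have σ_ne_zero : σ ≠ 0 := Function.ne_iff.2 ⟨Classical.arbitrary ι, (σ_pos _).ne'⟩
  refine ⟨σ, σ_pos, Set.Subset.antisymm
    (fun w hw => hQ.exists_eq_smul_of_vecMul_eq_zero hconn σ_ne_zero hσ hw) ?_⟩
  rintro _ ⟨c, rfl⟩
  rw [Set.mem_ofPred_eq, smul_vecMul, hσ, smul_zero]

end Field

theorem stmt16 (n : ℕ) (hn : 1 ≤ n)
    (Q : Matrix (Fin (n+1)) (Fin (n+1)) ℝ)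
    (hrow : ∀ i, ∑ j, Q i j = 0)
    (hoff : ∀ i j, i ≠ j → Q i j ≤ 0)
    (hsc : ∀ i j : Fin (n+1), i ≠ j →
      Relation.TransGen (fun a b => a ≠ b ∧ Q a b < 0) i j) :
    ∃ sig : Fin (n+1) → ℝ, (∀ i, 0 < sig i) ∧
      {w : Fin (n+1) → ℝ | Matrix.vecMul w Q = 0}
        = {w : Fin (n+1) → ℝ | ∃ c : ℝ, w = c • sig} :=
  stmt16_general ⟨funext fun i => (dotProduct_one (Q i)).trans (hrow i), hoff⟩ fun i j =>
    Relation.reflTransGen_iff_eq_or_transGen.2 (or_iff_not_imp_left.2 fun h => hsc i j (Ne.symm h))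
end

section
/- Let n ≥ 1 and let Σ : Fin (n+1) → ℝ be strictly positive. Let Q₁, Q₂ : Matrix (Fin (n+1)) (Fin (n+1)) ℝ both have all row sums zero and nonpositive off-diagonal entries, with Matrix.vecMul Σ Q₁ = 0 and Matrix.vecMul Σ Q₂ = 0, and suppose the support digraph of Q₁ (edge from i to j iff i ≠ j and Q₁ i j < 0) is strongly connected. Then for every real ε ≥ 0, the left kernel {w : Fin (n+1) → ℝ | Matrix.vecMul w (Q₁ + ε • Q₂) = 0} is exactly the set of real scalar multiples of Σ. -/
open Matrix

/-!
Let `s` be a positive left null vector of a strongly connected Z-matrix, `w` another left null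
vector, and `c` the largest scalar with `c • s ≤ w`. Then `v = w - c • s` is a nonnegative left null
vector vanishing at some vertex `k`. In the null equation of a column `j` with `v j = 0` all terms
are nonpositive, so each of them is zero and `v` vanishes at every in-neighbour of `j`. Hence the
zeros of `v` spread backwards along edges from `k` to the whole digraph.

Adding a nonnegative multiple of another Z-matrix annihilated by `s` keeps `s` a null vector and
loses no edge.
-/

variable {ι R K : Type*}

/-- A Z-matrix: a square matrix whose off-diagonal entries are nonpositive. Laplacians are the
Z-matrices with zero row sums. -/
def IsZMatrix [Zero R] [LE R] (A : Matrix ι ι R) : Prop :=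
  ∀ i j, i ≠ j → A i j ≤ 0

/-- The edge relation of the support digraph of a matrix; for a Laplacian, that of the underlying
weighted digraph. Loops and positive off-diagonal entries are ignored. -/
def SupportEdge [Zero R] [LT R] (A : Matrix ι ι R) (i j : ι) : Prop :=
  i ≠ j ∧ A i j < 0

theorem IsZMatrix.add [AddZeroClass R] [Preorder R] [AddLeftMono R] {A B : Matrix ι ι R}
    (hA : IsZMatrix A) (hB : IsZMatrix B) : IsZMatrix (A + B) :=
  fun i j hij => add_nonpos (hA i j hij) (hB i j hij)

theorem IsZMatrix.smul [MulZeroClass R] [Preorder R] [PosMulMono R] {A : Matrix ι ι R} {r : R}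
    (hA : IsZMatrix A) (hr : 0 ≤ r) : IsZMatrix (r • A) :=
  fun i j hij => mul_nonpos_of_nonneg_of_nonpos hr (hA i j hij)

theorem SupportEdge.add [AddZeroClass R] [Preorder R] [AddLeftMono R] {A B : Matrix ι ι R}
    {i j : ι} (hA : SupportEdge A i j) (hB : IsZMatrix B) : SupportEdge (A + B) i j :=
  ⟨hA.1, add_neg_of_neg_of_nonpos hA.2 (hB i j hA.1)⟩

section NullVector

variable [Fintype ι] [Ring R] [PartialOrder R] [IsOrderedRing R] [NoZeroDivisors R]
  {A : Matrix ι ι R} {v : ι → R} {i j : ι}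

theorem IsZMatrix.eq_zero_of_supportEdge (hA : IsZMatrix A) (hv : 0 ≤ v) (hvA : (v ᵥ* A) j = 0)
    (hij : SupportEdge A i j) (hj : v j = 0) : v i = 0 := by
  have term_nonpos : ∀ l ∈ Finset.univ, v l * A l j ≤ 0 := by
    intro l _
    obtain rfl | hlj := eq_or_ne l j
    · rw [hj, zero_mul]
    · exact mul_nonpos_of_nonneg_of_nonpos (hv l) (hA l j hlj)
  have term_eq_zero : v i * A i j = 0 :=
    (Finset.sum_eq_zero_iff_of_nonpos term_nonpos).1 hvA i (Finset.mem_univ i)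
  exact (mul_eq_zero.1 term_eq_zero).resolve_right hij.2.ne

theorem IsZMatrix.eq_zero_of_reflTransGen_supportEdge (hA : IsZMatrix A) (hv : 0 ≤ v)
    (hvA : v ᵥ* A = 0) (hij : Relation.ReflTransGen (SupportEdge A) i j) (hj : v j = 0) :
    v i = 0 := by
  induction hij using Relation.ReflTransGen.head_induction_on with
  | refl => exact hj
  | head edge _ ih => exact hA.eq_zero_of_supportEdge hv (congrFun hvA _) edge ih

end NullVector

section Kernel

variable [LinearOrder K]

theorem exists_smul_le_and_smul_apply_eq [Finite ι] [Nonempty ι] [DivisionRing K]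
    [IsStrictOrderedRing K] {s : ι → K} (hs : ∀ i, 0 < s i) (w : ι → K) :
    ∃ c : K, c • s ≤ w ∧ ∃ k, (c • s) k = w k := by
  obtain ⟨k, hk⟩ := Finite.exists_min fun i => w i / s i
  exact ⟨w k / s k, fun i => (le_div_iff₀ (hs i)).1 (hk i), k, div_mul_cancel₀ _ (hs k).ne'⟩

theorem IsZMatrix.vecMul_eq_zero_iff_exists_smul [Fintype ι] [DivisionRing K]
    [IsStrictOrderedRing K] {A : Matrix ι ι K} {s w : ι → K} (hA : IsZMatrix A)
    (hconn : ∀ i j, Relation.ReflTransGen (SupportEdge A) i j) (hs : ∀ i, 0 < s i)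
    (hsA : s ᵥ* A = 0) : w ᵥ* A = 0 ↔ ∃ c : K, w = c • s := by
  refine ⟨fun hwA => ?_, ?_⟩
  · cases isEmpty_or_nonempty ι
    · exact ⟨0, Subsingleton.elim _ _⟩
    obtain ⟨c, hle, k, hk⟩ := exists_smul_le_and_smul_apply_eq hs w
    have hnull : (w - c • s) ᵥ* A = 0 := by
      rw [sub_vecMul, smul_vecMul, hwA, hsA, smul_zero, sub_zero]
    have hzero : (w - c • s) k = 0 := sub_eq_zero.2 hk.symm
    exact ⟨c, funext fun i => sub_eq_zero.1 <|
      hA.eq_zero_of_reflTransGen_supportEdge (sub_nonneg.2 hle) hnull (hconn i k) hzero⟩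
  · rintro ⟨c, rfl⟩
    rw [smul_vecMul, hsA, smul_zero]

theorem stmt17_general [Fintype ι] [Field K] [IsStrictOrderedRing K] {s : ι → K}
    (hs : ∀ i, 0 < s i) {A B : Matrix ι ι K} (hA : IsZMatrix A) (hB : IsZMatrix B)
    (hsA : s ᵥ* A = 0) (hsB : s ᵥ* B = 0)
    (hconn : ∀ i j, Relation.ReflTransGen (SupportEdge A) i j) {ε : K} (hε : 0 ≤ ε) :
    {w : ι → K | w ᵥ* (A + ε • B) = 0} = {w : ι → K | ∃ c : K, w = c • s} := by
  have hεB : IsZMatrix (ε • B) := hB.smul hε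
  have hconn_add : ∀ i j, Relation.ReflTransGen (SupportEdge (A + ε • B)) i j :=
    fun i j => (hconn i j).lift id fun _ _ edge => edge.add hεB
  have hs_add : s ᵥ* (A + ε • B) = 0 := by
    rw [vecMul_add, vecMul_smul, hsA, hsB, smul_zero, add_zero]
  exact Set.ext fun _ => (hA.add hεB).vecMul_eq_zero_iff_exists_smul hconn_add hs hs_add

end Kernel

theorem stmt17 (n : ℕ) (hn : 1 ≤ n) (sig : Fin (n+1) → ℝ) (hpos : ∀ i, 0 < sig i)
    (Q₁ Q₂ : Matrix (Fin (n+1)) (Fin (n+1)) ℝ)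
    (hrow₁ : ∀ i, ∑ j, Q₁ i j = 0)
    (hoff₁ : ∀ i j, i ≠ j → Q₁ i j ≤ 0)
    (hrow₂ : ∀ i, ∑ j, Q₂ i j = 0)
    (hoff₂ : ∀ i j, i ≠ j → Q₂ i j ≤ 0)
    (hker₁ : Matrix.vecMul sig Q₁ = 0)
    (hker₂ : Matrix.vecMul sig Q₂ = 0)
    (hsc : ∀ i j : Fin (n+1), i ≠ j →
      Relation.TransGen (fun a b => a ≠ b ∧ Q₁ a b < 0) i j) :
    ∀ ε : ℝ, 0 ≤ ε →
      {w : Fin (n+1) → ℝ | Matrix.vecMul w (Q₁ + ε • Q₂) = 0}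
        = {w : Fin (n+1) → ℝ | ∃ c : ℝ, w = c • sig} :=
  fun _ hε => stmt17_general hpos hoff₁ hoff₂ hker₁ hker₂
    (fun i j => Relation.reflTransGen_iff_eq_or_transGen.2 <|
      (eq_or_ne j i).imp_right fun hji => hsc i j hji.symm) hε
end
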